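/- Let g : ℝ → ℂ be infinitely differentiable on (0,1) and h : ℝ → ℂ be infinitely differentiable on (−1/2, 1/2), and suppose there exist r > 0 and a holomorphic function F₀ on the disk B(1/2, r) ⊂ ℂ with g(x) = F₀(x) for all real x with |x − 1/2| < r and h(t) = F₀(1/2 + it) for all real t with |t| < r. Suppose moreover that S := ∑_{n=0}^∞ (2^n/(2n+1)!) ∫_0^{1/2} x^{2n+1} ( |g^{(n)}(x)|² + |g^{(n)}(1−x)|² + |h^{(n)}(1/2 − x)|² + |h^{(n)}(x − 1/2)|² ) dx < ∞, where g^{(n)}, h^{(n)} are iterated derivatives within (0,1) and (−1/2,1/2) respectively. Then there exists a holomorphic function F on the open square D = {z ∈ ℂ : 0 < Re z < 1 and |Im z| < min(Re z, 1 − Re z)} with F(x) = g(x) for x ∈ (0,1), F(1/2 + it) = h(t) for t ∈ (−1/2, 1/2), and ∫_D |F(z)|² dA(z) < ∞; moreover there are absolute constants c, C > 0 (independent of g, h) with c ∫_D |F|² dA ≤ S ≤ C ∫_D |F|² dA. -/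

import Mathlib

open MeasureTheory Set Metric
open scoped ENNReal NNReal

/-- The open square `D` with vertices `0`, `1/2 + i/2`, `1`, `1/2 - i/2`. -/
def SquareD : Set ℂ := {z : ℂ | 0 < z.re ∧ z.re < 1 ∧ |z.im| < min z.re (1 - z.re)}

/-- The two-diagonal (AHS)-type sum built from data `g` on the horizontal diagonal `(0,1)`
and `h` on the vertical diagonal (via `t ↦ F(1/2 + it)`, `t ∈ (-1/2,1/2)`). -/
noncomputable def diagDataSum (g h : ℝ → ℂ) : ℝ≥0∞ :=
  ∑' n : ℕ, ENNReal.ofReal ((2 : ℝ) ^ n / (Nat.factorial (2 * n + 1) : ℝ)) *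
    ∫⁻ x in Ioo (0 : ℝ) (1 / 2),
      ENNReal.ofReal (x ^ (2 * n + 1)) *
        ((‖iteratedDerivWithin n g (Ioo 0 1) x‖₊ : ℝ≥0∞) ^ 2 +
          (‖iteratedDerivWithin n g (Ioo 0 1) (1 - x)‖₊ : ℝ≥0∞) ^ 2 +
          (‖iteratedDerivWithin n h (Ioo (-(1 / 2)) (1 / 2)) (1 / 2 - x)‖₊ : ℝ≥0∞) ^ 2 +
          (‖iteratedDerivWithin n h (Ioo (-(1 / 2)) (1 / 2)) (x - 1 / 2)‖₊ : ℝ≥0∞) ^ 2) ∂volume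


theorem aux_sup_bound {f f' : ℝ → ℂ} {a b : ℝ} (hab : a < b)
    (hf : ∀ x ∈ Icc a b, HasDerivAt f (f' x) x) (hf' : ContinuousOn f' (Icc a b))
    {x : ℝ} (hx : x ∈ Icc a b) :
    ‖f x‖ ^ 2 ≤ (1 / (b - a) + 1) * ∫ t in a..b, (‖f t‖ ^ 2 + ‖f' t‖ ^ 2) := by
  have hfc : ContinuousOn f (Icc a b) := fun y hy => (hf y hy).continuousAt.continuousWithinAt
  set e : ℝ → ℝ := fun t => ‖f t‖ ^ 2 + ‖f' t‖ ^ 2 with he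
  have hec : ContinuousOn e (Icc a b) := (hfc.norm.pow 2).add (hf'.norm.pow 2)
  have he0 : ∀ t, 0 ≤ e t := fun t => by positivity
  set p : ℝ → ℝ := fun t => 2 * inner ℝ (f t) (f' t) with hp
  have hpc : ContinuousOn p (Icc a b) := (hfc.inner hf').const_smul (2 : ℝ)
  have hpe : ∀ t, |p t| ≤ e t := by
    intro t
    have h1 := abs_real_inner_le_norm (f t) (f' t)
    have h2 : |p t| = 2 * |inner ℝ (f t) (f' t)| := by simp [hp, abs_mul]
    rw [h2]
    nlinarith [sq_nonneg (‖f t‖ - ‖f' t‖)]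
  have hE : IntervalIntegrable e volume a b := by
    apply ContinuousOn.intervalIntegrable; rwa [uIcc_of_le hab.le]
  have key : ∀ y ∈ Icc a b, ‖f x‖ ^ 2 - ‖f y‖ ^ 2 ≤ ∫ t in a..b, e t := by
    have gen : ∀ u ∈ Icc a b, ∀ v ∈ Icc a b, u ≤ v →
        |‖f v‖ ^ 2 - ‖f u‖ ^ 2| ≤ ∫ t in a..b, e t := by
      intro u hu v hv huv
      have hsub : Icc u v ⊆ Icc a b := Icc_subset_Icc hu.1 hv.2
      have h1 : ∫ t in u..v, p t = ‖f v‖ ^ 2 - ‖f u‖ ^ 2 := by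
        apply intervalIntegral.integral_eq_sub_of_hasDerivAt (f := fun t => ‖f t‖ ^ 2)
        · intro t ht
          rw [uIcc_of_le huv] at ht
          exact (hf t (hsub ht)).norm_sq
        · apply ContinuousOn.intervalIntegrable; rw [uIcc_of_le huv]; exact hpc.mono hsub
      rw [← h1]
      calc |∫ t in u..v, p t| ≤ ∫ t in u..v, |p t| :=
            intervalIntegral.abs_integral_le_integral_abs huv
        _ ≤ ∫ t in u..v, e t := by
            apply intervalIntegral.integral_mono_on huv
            · apply ContinuousOn.intervalIntegrable; rw [uIcc_of_le huv]; exact (hpc.mono hsub).abs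
            · apply ContinuousOn.intervalIntegrable; rw [uIcc_of_le huv]; exact (hec.mono hsub)
            · intro t _; exact hpe t
        _ ≤ ∫ t in a..b, e t := by
            apply intervalIntegral.integral_mono_interval hu.1 huv hv.2 _ hE
            exact Filter.Eventually.of_forall he0
    intro y hy
    rcases le_total x y with h | h
    · have := gen x hx y hy h
      rw [abs_le] at this; linarith [this.1]
    · exact (le_abs_self _).trans (gen y hy x hx h)
  have h3 : ∫ t in a..b, (‖f x‖ ^ 2 - ∫ t in a..b, e t) ≤ ∫ t in a..b, e t := by
    apply intervalIntegral.integral_mono_on hab.le (by simp) hE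
    intro y hy
    have := key y hy
    have h4 : ‖f y‖ ^ 2 ≤ e y := by simp [he]
    linarith
  rw [intervalIntegral.integral_const, smul_eq_mul] at h3
  have hba : 0 < b - a := by linarith
  have : ‖f x‖ ^ 2 - ∫ t in a..b, e t ≤ (1 / (b - a)) * ∫ t in a..b, e t := by
    rw [one_div, ← div_eq_inv_mul, le_div_iff₀ hba]; linarith
  linarith

/-- From finiteness of the lintegral to a real integral bound. -/
theorem aux_int_bound {f : ℝ → ℂ} {n : ℕ} {S : ℝ≥0∞} (hS : S ≠ ⊤)
    {a b : ℝ} (ha : 0 < a) (hab : a ≤ b) (hb : b < 1 / 2)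
    (hf : ContinuousOn f (Icc a b))
    (h : ENNReal.ofReal ((2 : ℝ) ^ n / (Nat.factorial (2 * n + 1) : ℝ)) *
      ∫⁻ x in Ioo (0 : ℝ) (1 / 2), ENNReal.ofReal (x ^ (2 * n + 1)) * (‖f x‖₊ : ℝ≥0∞) ^ 2 ≤ S) :
    ∫ t in a..b, ‖f t‖ ^ 2 ≤ S.toReal * ((2 * n + 1).factorial / (2 ^ n * a ^ (2 * n + 1))) := by
  set k : ℝ := (2 : ℝ) ^ n / (Nat.factorial (2 * n + 1) : ℝ) with hk
  have hkpos : 0 < k := by positivity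
  have hc : ContinuousOn (fun t => k * a ^ (2 * n + 1) * ‖f t‖ ^ 2) (Icc a b) :=
    (hf.norm.pow 2).const_smul (k * a ^ (2 * n + 1))
  have h1 : ENNReal.ofReal (∫ t in Icc a b, k * a ^ (2 * n + 1) * ‖f t‖ ^ 2) ≤ S := by
    rw [ofReal_integral_eq_lintegral_ofReal (hc.integrableOn_Icc)
      (Filter.Eventually.of_forall fun t => by positivity)]
    refine le_trans ?_ h
    rw [← lintegral_const_mul' _ _ ENNReal.ofReal_ne_top]
    refine le_trans ?_ (lintegral_mono_set (s := Icc a b) ?_)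
    · apply setLIntegral_mono' measurableSet_Icc
      intro t ht
      have : ((‖f t‖₊ : ℝ≥0∞)) ^ 2 = ENNReal.ofReal (‖f t‖ ^ 2) := by
        rw [ENNReal.ofReal_pow (norm_nonneg _), ofReal_norm]; rfl
      have ht0 : 0 ≤ t := ha.le.trans ht.1
      rw [this, ← ENNReal.ofReal_mul (by positivity), ← ENNReal.ofReal_mul (by positivity)]
      apply ENNReal.ofReal_le_ofReal
      rw [← mul_assoc]
      have := ht.1
      gcongr
    · intro t ht; exact ⟨ha.trans_le ht.1, ht.2.trans_lt hb⟩
  have h2 := (ENNReal.ofReal_le_iff_le_toReal hS).1 h1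
  rw [integral_Icc_eq_integral_Ioc, ← intervalIntegral.integral_of_le hab,
    intervalIntegral.integral_const_mul] at h2
  have h3 : ((2 * n + 1).factorial / (2 ^ n * a ^ (2 * n + 1)) : ℝ) = (k * a ^ (2 * n + 1))⁻¹ := by
    rw [hk]; field_simp
  rw [h3, ← div_eq_mul_inv, le_div_iff₀ (by positivity)]
  linarith

theorem aux_fact_bound (n : ℕ) : ((2 * n).factorial : ℝ) ≤ 4 ^ n * (n.factorial : ℝ) ^ 2 := by
  have h := Nat.choose_le_two_pow (2 * n) n
  have h2 := Nat.choose_mul_factorial_mul_factorial (n := 2 * n) (k := n) (by omega)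
  have h3 : 2 * n - n = n := by omega
  rw [h3] at h2
  have : (2 * n).factorial ≤ 4 ^ n * n.factorial ^ 2 := by
    rw [← h2, mul_assoc, ← sq]
    have h4 : (2 : ℕ) ^ (2 * n) = 4 ^ n := by rw [pow_mul]; norm_num
    rw [← h4]
    gcongr
  exact_mod_cast this

theorem aux_poly_geom {q : ℝ} (hq0 : 0 ≤ q) (hq : q < 1) :
    ∃ B : ℝ, 0 ≤ B ∧ ∀ n : ℕ, (2 * n + 3 : ℝ) ^ 3 * q ^ n ≤ B := by
  have h := tendsto_pow_const_mul_const_pow_of_abs_lt_one 3 (r := q) (by rwa [abs_of_nonneg hq0])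
  obtain ⟨B, hB⟩ := h.bddAbove_range
  have hB' : ∀ n : ℕ, (n : ℝ) ^ 3 * q ^ n ≤ B := fun n => hB ⟨n, rfl⟩
  have hB0 : 0 ≤ B := by simpa using hB' 0
  refine ⟨125 * B + 27, by positivity, fun n => ?_⟩
  rcases Nat.eq_zero_or_pos n with rfl | hn
  · norm_num; linarith
  · have hn1 : (1 : ℝ) ≤ n := by exact_mod_cast hn
    have h1 : (2 * n + 3 : ℝ) ^ 3 ≤ (5 * n) ^ 3 := by
      apply pow_le_pow_left₀ (by positivity); linarith
    calc (2 * n + 3 : ℝ) ^ 3 * q ^ n ≤ (5 * n) ^ 3 * q ^ n := by gcongr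
      _ = 125 * (n ^ 3 * q ^ n) := by ring
      _ ≤ 125 * B + 27 := by linarith [hB' n]

theorem aux_growth {d : ℕ → ℝ → ℂ}
    (hd : ∀ n, ∀ x ∈ Ioo (0 : ℝ) (1 / 2), HasDerivAt (d n) (d (n + 1) x) x)
    {S : ℝ≥0∞} (hS : S ≠ ⊤)
    (h : ∀ n : ℕ, ENNReal.ofReal ((2 : ℝ) ^ n / (Nat.factorial (2 * n + 1) : ℝ)) *
      ∫⁻ x in Ioo (0 : ℝ) (1 / 2), ENNReal.ofReal (x ^ (2 * n + 1)) * (‖d n x‖₊ : ℝ≥0∞) ^ 2 ≤ S)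
    {x : ℝ} (hx : x ∈ Ioo (0 : ℝ) (1 / 2)) {ρ : ℝ} (hρ : 0 ≤ ρ) (h2 : 2 * ρ ^ 2 < x ^ 2) :
    ∃ δ : ℝ, 0 < δ ∧ ∃ C : ℝ, 0 ≤ C ∧ ∀ y : ℝ, |y - x| ≤ δ → y ∈ Ioo (0 : ℝ) (1 / 2) ∧
      ∀ n : ℕ, ‖d n y‖ * ρ ^ n ≤ C * n.factorial := by
  obtain ⟨hx0, hx1⟩ := hx
  obtain ⟨a, ha1, hax⟩ : ∃ a, √2 * ρ < a ∧ a < x := by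
    apply exists_between
    apply lt_of_pow_lt_pow_left₀ 2 hx0.le
    rw [mul_pow, Real.sq_sqrt (by norm_num)]; exact h2
  have ha0 : 0 < a := lt_of_le_of_lt (by positivity) ha1
  have hqa : 2 * ρ ^ 2 < a ^ 2 := by
    have := pow_lt_pow_left₀ ha1 (by positivity) (two_ne_zero)
    rwa [mul_pow, Real.sq_sqrt (by norm_num)] at this
  obtain ⟨b, hxb, hb⟩ := exists_between hx1
  have hab : a < b := hax.trans hxb
  have hsub : Icc a b ⊆ Ioo (0 : ℝ) (1 / 2) := fun t ht => ⟨ha0.trans_le ht.1, ht.2.trans_lt hb⟩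
  have hcont : ∀ n, ContinuousOn (d n) (Icc a b) := fun n t ht =>
    (hd n t (hsub ht)).continuousAt.continuousWithinAt
  set q : ℝ := 2 * ρ ^ 2 / a ^ 2 with hq
  have hq0 : 0 ≤ q := by positivity
  have hq1 : q < 1 := by rw [hq, div_lt_one (by positivity)]; exact hqa
  obtain ⟨B, hB0, hB⟩ := aux_poly_geom hq0 hq1
  set L : ℝ := 1 / (b - a) + 1 with hL
  have hL0 : 0 ≤ L := by
    have : 0 < b - a := by linarith
    positivity
  set M : ℝ := S.toReal with hM
  have hM0 : 0 ≤ M := ENNReal.toReal_nonneg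
  refine ⟨min (x - a) (b - x), lt_min (by linarith) (by linarith),
    √(L * M * (B / a + B / a ^ 3)), by positivity, fun y hy => ?_⟩
  have hy1 := abs_le.1 (hy.trans (min_le_left _ _))
  have hy2 := abs_le.1 (hy.trans (min_le_right _ _))
  have hyI : y ∈ Icc a b := ⟨by linarith [hy1.1], by linarith [hy2.2]⟩
  refine ⟨hsub hyI, fun n => ?_⟩
  have key := aux_sup_bound hab (fun t ht => hd n t (hsub ht)) (hcont (n + 1)) hyI
  rw [intervalIntegral.integral_add] at key
  rotate_left
  · apply ContinuousOn.intervalIntegrable; rw [uIcc_of_le hab.le]; exact (hcont n).norm.pow 2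
  · apply ContinuousOn.intervalIntegrable; rw [uIcc_of_le hab.le]; exact (hcont (n + 1)).norm.pow 2
  have k1 := aux_int_bound hS ha0 hab.le hb (hcont n) (h n)
  have k2 := aux_int_bound hS ha0 hab.le hb (hcont (n + 1)) (h (n + 1))
  have fb := aux_fact_bound n
  have e1 : ((2 * n + 1).factorial : ℝ) ≤ (2 * n + 3) ^ 3 * (4 ^ n * (n.factorial : ℝ) ^ 2) := by
    rw [Nat.factorial_succ]; push_cast
    apply mul_le_mul _ fb (by positivity) (by positivity)
    nlinarith [sq_nonneg (n : ℝ), Nat.cast_nonneg (α := ℝ) n, pow_nonneg (Nat.cast_nonneg (α := ℝ) n) 3]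
  have e2 : ((2 * (n + 1) + 1).factorial : ℝ) ≤ (2 * n + 3) ^ 3 * (4 ^ n * (n.factorial : ℝ) ^ 2) := by
    have : 2 * (n + 1) + 1 = (2 * n + 2) + 1 := by ring
    rw [this, Nat.factorial_succ, Nat.factorial_succ, Nat.factorial_succ, ← mul_assoc, ← mul_assoc]
    push_cast
    apply mul_le_mul _ fb (by positivity) (by positivity)
    nlinarith [sq_nonneg (n : ℝ), Nat.cast_nonneg (α := ℝ) n, pow_nonneg (Nat.cast_nonneg (α := ℝ) n) 3]
  have hqn : q ^ n = 2 ^ n * (ρ ^ n) ^ 2 / (a ^ n) ^ 2 := by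
    rw [hq, div_pow, mul_pow, ← pow_mul, ← pow_mul, ← pow_mul, ← pow_mul, mul_comm 2 n]
  have h4 : (4 : ℝ) ^ n = 2 ^ n * 2 ^ n := by rw [← mul_pow]; norm_num
  have f1 : ((2 * n + 1).factorial / (2 ^ n * a ^ (2 * n + 1)) : ℝ) * (ρ ^ n) ^ 2
      ≤ B / a * (n.factorial : ℝ) ^ 2 := by
    calc ((2 * n + 1).factorial / (2 ^ n * a ^ (2 * n + 1)) : ℝ) * (ρ ^ n) ^ 2
        ≤ ((2 * n + 3) ^ 3 * (4 ^ n * (n.factorial : ℝ) ^ 2)) / (2 ^ n * a ^ (2 * n + 1))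
          * (ρ ^ n) ^ 2 := by gcongr
      _ = ((2 * n + 3) ^ 3 * q ^ n) / a * (n.factorial : ℝ) ^ 2 := by
          rw [hqn, h4, pow_succ a (2 * n), mul_comm 2 n, pow_mul a]; field_simp
      _ ≤ _ := by gcongr; exact hB n
  have f2 : ((2 * (n + 1) + 1).factorial / (2 ^ (n + 1) * a ^ (2 * (n + 1) + 1)) : ℝ) * (ρ ^ n) ^ 2
      ≤ B / a ^ 3 * (n.factorial : ℝ) ^ 2 := by
    calc ((2 * (n + 1) + 1).factorial / (2 ^ (n + 1) * a ^ (2 * (n + 1) + 1)) : ℝ) * (ρ ^ n) ^ 2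
        ≤ ((2 * n + 3) ^ 3 * (4 ^ n * (n.factorial : ℝ) ^ 2)) / (2 ^ n * a ^ (2 * (n + 1) + 1))
          * (ρ ^ n) ^ 2 := by
          gcongr
          · norm_num
          · omega
      _ = ((2 * n + 3) ^ 3 * q ^ n) / a ^ 3 * (n.factorial : ℝ) ^ 2 := by
          have : 2 * (n + 1) + 1 = n * 2 + 3 := by ring
          rw [hqn, h4, this, pow_add a, pow_mul a]; field_simp
      _ ≤ _ := by gcongr; exact hB n
  have g : (‖d n y‖ * ρ ^ n) ^ 2 ≤ L * M * (B / a + B / a ^ 3) * (n.factorial : ℝ) ^ 2 := by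
    calc (‖d n y‖ * ρ ^ n) ^ 2 = ‖d n y‖ ^ 2 * (ρ ^ n) ^ 2 := by ring
      _ ≤ (L * (M * ((2 * n + 1).factorial / (2 ^ n * a ^ (2 * n + 1))) +
          M * ((2 * (n + 1) + 1).factorial / (2 ^ (n + 1) * a ^ (2 * (n + 1) + 1))))) * (ρ ^ n) ^ 2 := by
          gcongr
          refine key.trans ?_
          gcongr
      _ = L * M * (((2 * n + 1).factorial / (2 ^ n * a ^ (2 * n + 1))) * (ρ ^ n) ^ 2 +
          ((2 * (n + 1) + 1).factorial / (2 ^ (n + 1) * a ^ (2 * (n + 1) + 1))) * (ρ ^ n) ^ 2) := by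
          ring
      _ ≤ L * M * (B / a * (n.factorial : ℝ) ^ 2 + B / a ^ 3 * (n.factorial : ℝ) ^ 2) := by
          gcongr
      _ = _ := by ring
  have : ‖d n y‖ * ρ ^ n ≤ √(L * M * (B / a + B / a ^ 3) * (n.factorial : ℝ) ^ 2) :=
    Real.le_sqrt_of_sq_le g
  rwa [Real.sqrt_mul (by positivity), Real.sqrt_sq (by positivity)] at this

/-- Taylor sum at a real point. -/
noncomputable def TaylorS (d : ℕ → ℝ → ℂ) (x : ℝ) (z : ℂ) : ℂ :=
  ∑' n : ℕ, d n x / (n.factorial : ℂ) * (z - x) ^ n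

/-- The disc touching the sides of the sector. -/
def discB (x : ℝ) : Set ℂ := {z : ℂ | 2 * ‖z - x‖ ^ 2 < x ^ 2}

/-- Growth condition. -/
def GrowthC (d : ℕ → ℝ → ℂ) : Prop :=
  ∀ x ∈ Ioo (0 : ℝ) (1 / 2), ∀ ρ : ℝ, 0 ≤ ρ → 2 * ρ ^ 2 < x ^ 2 →
    ∃ δ : ℝ, 0 < δ ∧ ∃ C : ℝ, 0 ≤ C ∧ ∀ y : ℝ, |y - x| ≤ δ → y ∈ Ioo (0 : ℝ) (1 / 2) ∧
      ∀ n : ℕ, ‖d n y‖ * ρ ^ n ≤ C * n.factorial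

theorem aux_exists_rho {x r : ℝ} (hx : 0 < x) (hr : 0 ≤ r) (h : 2 * r ^ 2 < x ^ 2) :
    ∃ ρ : ℝ, r < ρ ∧ 2 * ρ ^ 2 < x ^ 2 := by
  have h1 : √2 * r < x := by
    apply lt_of_pow_lt_pow_left₀ 2 hx.le
    rw [mul_pow, Real.sq_sqrt (by norm_num)]; exact h
  obtain ⟨c, hc1, hc2⟩ := exists_between h1
  have hc0 : 0 ≤ c := le_trans (by positivity) hc1.le
  refine ⟨c / √2, ?_, ?_⟩
  · rw [lt_div_iff₀ (by positivity)]; linarith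
  · rw [div_pow, Real.sq_sqrt (by norm_num)]
    have : c ^ 2 < x ^ 2 := pow_lt_pow_left₀ hc2 hc0 two_ne_zero
    linarith

theorem discB_eq_ball {x : ℝ} (hx : 0 < x) : discB x = ball (x : ℂ) (x / √2) := by
  ext z
  simp only [discB, mem_ofPred_eq, mem_ball, dist_eq_norm]
  rw [lt_div_iff₀ (by positivity)]
  constructor
  · intro h
    apply lt_of_pow_lt_pow_left₀ 2 hx.le
    rw [mul_pow, Real.sq_sqrt (by norm_num)]; linarith
  · intro h
    have := pow_lt_pow_left₀ h (by positivity) two_ne_zero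
    rw [mul_pow, Real.sq_sqrt (by norm_num)] at this; linarith

theorem isOpen_discB (x : ℝ) : IsOpen (discB x) :=
  isOpen_lt (by fun_prop) continuous_const

theorem self_mem_discB {x : ℝ} (hx : 0 < x) : (x : ℂ) ∈ discB x := by
  simp only [discB, mem_ofPred_eq, sub_self, norm_zero]
  have : 0 < x ^ 2 := by positivity
  simpa using this

theorem aux_term_bound {d : ℕ → ℝ → ℂ} {x ρ C r : ℝ} (hρ : 0 < ρ)
    (hC : ∀ n : ℕ, ‖d n x‖ * ρ ^ n ≤ C * n.factorial) {z : ℂ} (hz : ‖z - x‖ ≤ r) (n : ℕ) :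
    ‖d n x / (n.factorial : ℂ) * (z - x) ^ n‖ ≤ C * (r / ρ) ^ n := by
  have hr : 0 ≤ r := (norm_nonneg _).trans hz
  rw [norm_mul, norm_div, norm_pow, Complex.norm_natCast]
  have h1 : ‖d n x‖ / n.factorial ≤ C / ρ ^ n := by
    rw [div_le_div_iff₀ (by positivity) (by positivity)]; exact hC n
  calc ‖d n x‖ / n.factorial * ‖z - x‖ ^ n ≤ C / ρ ^ n * r ^ n := by
        gcongr
        exact le_trans (by positivity) h1
    _ = C * (r / ρ) ^ n := by rw [div_pow]; ring

theorem aux_ts_norm_summable {d : ℕ → ℝ → ℂ} (H : GrowthC d) {x : ℝ} (hx : x ∈ Ioo (0 : ℝ) (1 / 2))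
    {z : ℂ} (hz : z ∈ discB x) :
    Summable (fun n : ℕ => ‖d n x / (n.factorial : ℂ) * (z - x) ^ n‖) := by
  obtain ⟨ρ, h1, h2⟩ := aux_exists_rho hx.1 (norm_nonneg _) hz
  have hρ : 0 < ρ := (norm_nonneg _).trans_lt h1
  obtain ⟨δ, hδ, C, hC, hb⟩ := H x hx ρ hρ.le h2
  have hb' := (hb x (by simpa using hδ.le)).2
  refine Summable.of_nonneg_of_le (fun _ => norm_nonneg _)
    (fun n => aux_term_bound hρ hb' le_rfl n) ?_
  apply Summable.mul_left
  apply summable_geometric_of_lt_one (by positivity)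
  rwa [div_lt_one hρ]

theorem aux_ts_hasSum {d : ℕ → ℝ → ℂ} (H : GrowthC d) {x : ℝ} (hx : x ∈ Ioo (0 : ℝ) (1 / 2))
    {z : ℂ} (hz : z ∈ discB x) :
    HasSum (fun n : ℕ => d n x / (n.factorial : ℂ) * (z - x) ^ n) (TaylorS d x z) :=
  (aux_ts_norm_summable H hx hz).of_norm.hasSum

theorem aux_ts_diff {d : ℕ → ℝ → ℂ} (H : GrowthC d) {x : ℝ} (hx : x ∈ Ioo (0 : ℝ) (1 / 2)) :
    DifferentiableOn ℂ (TaylorS d x) (discB x) := by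
  intro z hz
  obtain ⟨r, h1, h2⟩ := aux_exists_rho hx.1 (norm_nonneg _) hz
  have hr : 0 < r := (norm_nonneg _).trans_lt h1
  obtain ⟨ρ, h3, h4⟩ := aux_exists_rho hx.1 hr.le h2
  have hρ : 0 < ρ := hr.trans h3
  obtain ⟨δ, hδ, C, hC, hb⟩ := H x hx ρ hρ.le h4
  have hb' := (hb x (by simpa using hδ.le)).2
  have hD : DifferentiableOn ℂ (TaylorS d x) (ball (x : ℂ) r) := by
    unfold TaylorS
    apply Complex.differentiableOn_tsum_of_summable_norm (u := fun n => C * (r / ρ) ^ n)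
    · apply Summable.mul_left
      apply summable_geometric_of_lt_one (by positivity)
      rwa [div_lt_one hρ]
    · intro n
      fun_prop
    · exact isOpen_ball
    · intro n w hw
      rw [mem_ball, dist_eq_norm] at hw
      exact aux_term_bound hρ hb' hw.le n
  have : z ∈ ball (x : ℂ) r := by rwa [mem_ball, dist_eq_norm]
  exact (hD.differentiableAt (isOpen_ball.mem_nhds this)).differentiableWithinAt

theorem aux_taylor_deriv {d : ℕ → ℝ → ℂ} {s : Set ℝ}
    (hd : ∀ n, ∀ x ∈ s, HasDerivAt (d n) (d (n + 1) x) x) (y : ℝ) (n : ℕ) :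
    ∀ t ∈ s, HasDerivAt
      (fun t : ℝ => ∑ k ∈ Finset.range (n + 1), d k t / (k.factorial : ℂ) * ((y : ℂ) - t) ^ k)
      (d (n + 1) t / (n.factorial : ℂ) * ((y : ℂ) - t) ^ n) t := by
  intro t ht
  induction n with
  | zero => simpa using hd 0 t ht
  | succ n ih =>
    have h1 : HasDerivAt (fun t : ℝ => ((y : ℂ) - t)) (-1) t := by
      simpa using (Complex.ofRealCLM.hasDerivAt (x := t)).const_sub (y : ℂ)
    have h2 := ((hd (n + 1) t ht).div_const ((n + 1).factorial : ℂ)).mul (h1.pow (n + 1))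
    have h3 := ih.add h2
    refine (h3.congr_deriv ?_).congr_of_eventuallyEq (Filter.Eventually.of_forall fun u => ?_)
    · rw [Nat.factorial_succ]
      have a1 : ((n.factorial : ℕ) : ℂ) ≠ 0 := by exact_mod_cast n.factorial_ne_zero
      have a2 : ((n : ℂ) + 1) ≠ 0 := by exact_mod_cast n.succ_ne_zero
      push_cast
      simp only [Pi.pow_apply]
      field_simp
      ring
    · simp only [Pi.add_apply, Pi.mul_apply]
      rw [Finset.sum_range_succ (n := n + 1)]
      simp

theorem aux_ts_local {d : ℕ → ℝ → ℂ}
    (hd : ∀ n, ∀ x ∈ Ioo (0 : ℝ) (1 / 2), HasDerivAt (d n) (d (n + 1) x) x)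
    (H : GrowthC d) {x : ℝ} (hx : x ∈ Ioo (0 : ℝ) (1 / 2)) :
    ∀ᶠ y : ℝ in nhds x, TaylorS d x y = d 0 y := by
  obtain ⟨ρ, hρ⟩ : ∃ ρ : ℝ, ρ = x / 2 := ⟨_, rfl⟩
  have hx0 := hx.1
  have hρ0 : 0 < ρ := by rw [hρ]; positivity
  obtain ⟨δ, hδ, C, hC, hb⟩ := H x hx ρ hρ0.le (by rw [hρ]; nlinarith)
  have hm : 0 < min δ (ρ / 2) := by positivity
  filter_upwards [Metric.ball_mem_nhds x hm] with y hy
  rw [mem_ball, Real.dist_eq] at hy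
  have hy1 : |y - x| ≤ δ := hy.le.trans (min_le_left _ _)
  have hy2 : |y - x| ≤ ρ / 2 := hy.le.trans (min_le_right _ _)
  have hmem : (y : ℂ) ∈ discB x := by
    simp only [discB, mem_ofPred_eq]
    rw [← Complex.ofReal_sub, Complex.norm_real, Real.norm_eq_abs]
    have := pow_le_pow_left₀ (abs_nonneg _) hy2 2
    rw [hρ] at this
    nlinarith
  have hsum := (aux_ts_hasSum H hx hmem).tendsto_sum_nat
  have hsum' := hsum.comp (Filter.tendsto_add_atTop_nat 1)
  refine tendsto_nhds_unique hsum' ?_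
  rw [tendsto_iff_norm_sub_tendsto_zero]
  have hlim : Filter.Tendsto (fun n : ℕ => C * (((n + 1 : ℕ) : ℝ) ^ 1 * (1 / 2 : ℝ) ^ (n + 1)))
      Filter.atTop (nhds 0) := by
    have := ((tendsto_pow_const_mul_const_pow_of_abs_lt_one 1 (r := (1 / 2 : ℝ))
      (by rw [abs_of_pos] <;> norm_num)).comp (Filter.tendsto_add_atTop_nat 1)).const_mul C
    simpa using this
  refine squeeze_zero (fun _ => norm_nonneg _) (fun n => ?_) hlim
  have hseg : ∀ t ∈ uIcc x y, |t - x| ≤ |y - x| ∧ |y - t| ≤ |y - x| := by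
    intro t ht
    exact ⟨abs_sub_left_of_mem_uIcc ht, abs_sub_right_of_mem_uIcc ht⟩
  have hmv := (convex_uIcc x y).norm_image_sub_le_of_norm_hasDerivWithin_le
    (f := fun t : ℝ => ∑ k ∈ Finset.range (n + 1), d k t / (k.factorial : ℂ) * ((y : ℂ) - t) ^ k)
    (f' := fun t => d (n + 1) t / (n.factorial : ℂ) * ((y : ℂ) - t) ^ n)
    (C := C * (n + 1) / ρ ^ (n + 1) * |y - x| ^ n)
    (fun t ht => (aux_taylor_deriv hd y n t
      (hb t ((hseg t ht).1.trans hy1)).1).hasDerivWithinAt) ?_ right_mem_uIcc left_mem_uIcc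
  · have e1 : ∑ k ∈ Finset.range (n + 1), d k y / (k.factorial : ℂ) * ((y : ℂ) - y) ^ k = d 0 y := by
      rw [Finset.sum_range_succ']
      simp
    rw [e1] at hmv
    simp only [Function.comp_apply]
    refine hmv.trans ?_
    rw [Real.norm_eq_abs, abs_sub_comm x y]
    calc C * (n + 1) / ρ ^ (n + 1) * |y - x| ^ n * |y - x|
        = C * (n + 1) * (|y - x| / ρ) ^ (n + 1) := by rw [div_pow]; ring
      _ ≤ C * (n + 1) * (1 / 2) ^ (n + 1) := by
          have h7 : |y - x| / ρ ≤ 1 / 2 := by rw [div_le_iff₀ hρ0]; linarith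
          gcongr C * (n + 1) * ?_ ^ (n + 1)
      _ = _ := by push_cast; ring
  · intro t ht
    have hs := hseg t ht
    have hbt := (hb t (hs.1.trans hy1)).2 (n + 1)
    rw [norm_mul, norm_div, norm_pow, Complex.norm_natCast, ← Complex.ofReal_sub, Complex.norm_real,
      Real.norm_eq_abs]
    have h5 : ‖d (n + 1) t‖ / n.factorial ≤ C * (n + 1) / ρ ^ (n + 1) := by
      rw [div_le_div_iff₀ (by positivity) (by positivity)]
      rw [Nat.factorial_succ] at hbt
      push_cast at hbt
      linarith
    have := hs.2
    gcongr

theorem aux_identity {f g : ℂ → ℂ} {W : Set ℂ} (hW : IsOpen W) (hWc : IsPreconnected W)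
    (hf : DifferentiableOn ℂ f W) (hg : DifferentiableOn ℂ g W) {p : ℝ} (hp : (p : ℂ) ∈ W)
    (h : ∀ᶠ t : ℝ in nhds p, f t = g t) : EqOn f g W := by
  refine (hf.analyticOnNhd hW).eqOn_of_preconnected_of_frequently_eq (hg.analyticOnNhd hW) hWc hp ?_
  have h1 : ∃ᶠ t : ℝ in nhdsWithin p {p}ᶜ, f t = g t :=
    (h.filter_mono nhdsWithin_le_nhds).frequently
  have h2 : Filter.Tendsto (fun t : ℝ => (t : ℂ)) (nhdsWithin p {p}ᶜ) (nhdsWithin (p : ℂ) {(p : ℂ)}ᶜ) := by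
    apply tendsto_nhdsWithin_of_tendsto_nhds_of_eventually_within
    · exact (Complex.continuous_ofReal.tendsto p).mono_left nhdsWithin_le_nhds
    · filter_upwards [self_mem_nhdsWithin] with t ht
      simpa using ht
  exact h2.frequently h1

theorem aux_ts_real {d : ℕ → ℝ → ℂ}
    (hd : ∀ n, ∀ x ∈ Ioo (0 : ℝ) (1 / 2), HasDerivAt (d n) (d (n + 1) x) x)
    (H : GrowthC d) {x : ℝ} (hx : x ∈ Ioo (0 : ℝ) (1 / 2)) {y : ℝ} (hy : y ∈ Ioo (0 : ℝ) (1 / 2))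
    (hyx : (y : ℂ) ∈ discB x) : TaylorS d x y = d 0 y := by
  have hA : ∀ u ∈ Ioo (0 : ℝ) (1 / 2), ∀ t : ℝ, (t : ℂ) ∈ discB u →
      AnalyticAt ℝ (fun t : ℝ => TaylorS d u t) t := by
    intro u hu t ht
    have h1 : AnalyticAt ℂ (TaylorS d u) (t : ℂ) :=
      (aux_ts_diff H hu).analyticAt ((isOpen_discB u).mem_nhds ht)
    have h2 : AnalyticAt ℝ (TaylorS d u) (Complex.ofRealCLM t) := h1.restrictScalars
    exact h2.comp (Complex.ofRealCLM.analyticAt t)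
  set W : Set ℝ := {t : ℝ | (t : ℂ) ∈ discB x} ∩ Ioo (0 : ℝ) (1 / 2) with hW
  have hWc : IsPreconnected W := by
    apply Convex.isPreconnected
    apply Convex.inter _ (convex_Ioo _ _)
    rw [discB_eq_ball hx.1]
    exact (convex_ball (x : ℂ) (x / √2)).linear_preimage Complex.ofRealCLM.toLinearMap
  have h1 : AnalyticOnNhd ℝ (fun t : ℝ => TaylorS d x t) W := fun t ht => hA x hx t ht.1
  have h2 : AnalyticOnNhd ℝ (d 0) W := fun t ht =>
    (hA t ht.2 t (self_mem_discB ht.2.1)).congr (aux_ts_local hd H ht.2)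
  exact h1.eqOn_of_preconnected_of_eventuallyEq h2 hWc ⟨self_mem_discB hx.1, hx⟩
    (aux_ts_local hd H hx) ⟨hyx, hy⟩

theorem aux_ts_consistent {d : ℕ → ℝ → ℂ}
    (hd : ∀ n, ∀ x ∈ Ioo (0 : ℝ) (1 / 2), HasDerivAt (d n) (d (n + 1) x) x)
    (H : GrowthC d) {x y : ℝ} (hx : x ∈ Ioo (0 : ℝ) (1 / 2)) (hy : y ∈ Ioo (0 : ℝ) (1 / 2))
    {z : ℂ} (hzx : z ∈ discB x) (hzy : z ∈ discB y) : TaylorS d x z = TaylorS d y z := by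
  wlog hxy : x ≤ y generalizing x y
  · exact (this hy hx hzy hzx (le_of_not_ge hxy)).symm
  have hre : ∀ u : ℝ, z ∈ discB u → 2 * (z.re - u) ^ 2 < u ^ 2 := by
    intro u hu
    simp only [discB, mem_ofPred_eq] at hu
    have h1 : |(z - u).re| ≤ ‖z - u‖ := Complex.abs_re_le_norm _
    have h2 := pow_le_pow_left₀ (abs_nonneg _) h1 2
    rw [sq_abs] at h2
    simp at h2
    linarith
  have hmem : ∀ u t : ℝ, 2 * (t - u) ^ 2 < u ^ 2 → (t : ℂ) ∈ discB u := by
    intro u t h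
    simp only [discB, mem_ofPred_eq]
    rw [← Complex.ofReal_sub, Complex.norm_real, Real.norm_eq_abs, sq_abs]
    exact h
  have hx' := hre x hzx
  have hy' := hre y hzy
  obtain ⟨p, hp, hpx, hpy⟩ : ∃ p ∈ Ioo (0 : ℝ) (1 / 2), (p : ℂ) ∈ discB x ∧ (p : ℂ) ∈ discB y := by
    rcases le_or_gt z.re y with h | h
    · by_cases h' : z.re < 1 / 2
      · refine ⟨z.re, ⟨?_, h'⟩, hmem _ _ hx', hmem _ _ hy'⟩
        nlinarith [hx.1]
      · exact absurd (h.trans_lt hy.2) h'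
    · refine ⟨y, hy, hmem _ _ ?_, self_mem_discB hy.1⟩
      nlinarith
  have hW : IsOpen (discB x ∩ discB y) := (isOpen_discB x).inter (isOpen_discB y)
  have hWc : IsPreconnected (discB x ∩ discB y) := by
    rw [discB_eq_ball hx.1, discB_eq_ball hy.1]
    exact ((convex_ball _ _).inter (convex_ball _ _)).isPreconnected
  refine aux_identity hW hWc ((aux_ts_diff H hx).mono inter_subset_left)
    ((aux_ts_diff H hy).mono inter_subset_right) (p := p) ⟨hpx, hpy⟩ ?_ ⟨hzx, hzy⟩
  have e1 : ∀ᶠ t : ℝ in nhds p, (t : ℂ) ∈ discB x ∩ discB y :=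
    Complex.continuous_ofReal.continuousAt.eventually (hW.mem_nhds ⟨hpx, hpy⟩)
  filter_upwards [e1, isOpen_Ioo.mem_nhds hp] with t ht htI
  rw [aux_ts_real hd H hx htI ht.1, aux_ts_real hd H hy htI ht.2]

/-- The corner region. -/
def coneU : Set ℂ := {z : ℂ | ∃ x ∈ Ioo (0 : ℝ) (1 / 2), z ∈ discB x}

theorem isOpen_coneU : IsOpen coneU := by
  have : coneU = ⋃ x ∈ Ioo (0 : ℝ) (1 / 2), discB x := by
    ext z; simp [coneU]
  rw [this]
  exact isOpen_biUnion fun x _ => isOpen_discB x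

theorem aux_extension {d : ℕ → ℝ → ℂ}
    (hd : ∀ n, ∀ x ∈ Ioo (0 : ℝ) (1 / 2), HasDerivAt (d n) (d (n + 1) x) x)
    (H : GrowthC d) :
    ∃ G : ℂ → ℂ, DifferentiableOn ℂ G coneU ∧ (∀ z, z ∉ coneU → G z = 0) ∧
      (∀ x ∈ Ioo (0 : ℝ) (1 / 2), G x = d 0 x) ∧
      (∀ x ∈ Ioo (0 : ℝ) (1 / 2), ∀ z ∈ discB x,
        HasSum (fun n : ℕ => d n x / (n.factorial : ℂ) * (z - x) ^ n) (G z)) := by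
  classical
  set G : ℂ → ℂ := fun z => if h : z ∈ coneU then TaylorS d h.choose z else 0 with hG
  have key : ∀ x ∈ Ioo (0 : ℝ) (1 / 2), ∀ z ∈ discB x, G z = TaylorS d x z := by
    intro x hx z hz
    have hU : z ∈ coneU := ⟨x, hx, hz⟩
    simp only [hG, hU, dif_pos]
    exact aux_ts_consistent hd H hU.choose_spec.1 hx hU.choose_spec.2 hz
  refine ⟨G, ?_, ?_, ?_, ?_⟩
  · rintro z ⟨x, hx, hz⟩
    have h1 : DifferentiableAt ℂ (TaylorS d x) z :=
      (aux_ts_diff H hx).differentiableAt ((isOpen_discB x).mem_nhds hz)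
    have h2 : G =ᶠ[nhds z] TaylorS d x := by
      filter_upwards [(isOpen_discB x).mem_nhds hz] with w hw using key x hx w hw
    exact (h1.congr_of_eventuallyEq h2).differentiableWithinAt
  · intro z hz; simp [hG, hz]
  · intro x hx
    rw [key x hx x (self_mem_discB hx.1)]
    exact aux_ts_real hd H hx hx (self_mem_discB hx.1)
  · intro x hx z hz
    rw [key x hx z hz]
    exact aux_ts_hasSum H hx hz

theorem aux_orth (n m : ℕ) : ∫ θ in (-Real.pi)..Real.pi,
    Complex.exp (n * θ * Complex.I) * (starRingEnd ℂ) (Complex.exp (m * θ * Complex.I)) =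
      if n = m then (2 * Real.pi : ℂ) else 0 := by
  have h1 : ∀ θ : ℝ, Complex.exp (n * θ * Complex.I) *
      (starRingEnd ℂ) (Complex.exp (m * θ * Complex.I)) =
      Complex.exp ((((n : ℂ) - m) * Complex.I) * θ) := by
    intro θ
    rw [← Complex.exp_conj, ← Complex.exp_add]
    congr 1
    simp only [map_mul, Complex.conj_I, Complex.conj_ofReal, map_natCast]
    ring
  simp_rw [h1]
  split_ifs with h
  · subst h
    simp
    ring
  · have hc : ((n : ℂ) - m) * Complex.I ≠ 0 := by
      apply mul_ne_zero _ Complex.I_ne_zero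
      rw [sub_ne_zero]
      exact_mod_cast h
    rw [integral_exp_mul_complex hc]
    rw [div_eq_zero_iff]
    left
    rw [sub_eq_zero]
    rw [Complex.exp_eq_exp_iff_exists_int]
    refine ⟨(n : ℤ) - m, ?_⟩
    push_cast
    ring

theorem aux_parseval_real {a : ℕ → ℂ} (ha : Summable fun n => ‖a n‖) {f : ℝ → ℂ}
    (hf : ∀ θ : ℝ, HasSum (fun n : ℕ => a n * Complex.exp (n * θ * Complex.I)) (f θ)) :
    Continuous f ∧
    HasSum (fun n => (2 * Real.pi) * ‖a n‖ ^ 2) (∫ θ in (-Real.pi)..Real.pi, ‖f θ‖ ^ 2) := by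
  have hnorm : ∀ (n : ℕ) (θ : ℝ), ‖a n * Complex.exp (n * θ * Complex.I)‖ = ‖a n‖ := by
    intro n θ
    rw [norm_mul]
    have : ((n : ℂ) * θ * Complex.I) = ((n * θ : ℝ) : ℂ) * Complex.I := by push_cast; ring
    rw [this, Complex.norm_exp_ofReal_mul_I, mul_one]
  have hfc : Continuous f := by
    have : f = fun θ : ℝ => ∑' n : ℕ, a n * Complex.exp (n * θ * Complex.I) :=
      funext fun θ => (hf θ).tsum_eq.symm
    rw [this]
    apply continuous_tsum (fun n => by fun_prop) ha
    intro n θ; exact (hnorm n θ).le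
  refine ⟨hfc, ?_⟩
  have inner : ∀ n : ℕ, ∫ θ in (-Real.pi)..Real.pi,
      (starRingEnd ℂ) (f θ) * Complex.exp (n * θ * Complex.I) =
        (2 * Real.pi : ℂ) * (starRingEnd ℂ) (a n) := by
    intro n
    have h1 : HasSum (fun m => ∫ θ in (-Real.pi)..Real.pi,
        (starRingEnd ℂ) (a m * Complex.exp (m * θ * Complex.I)) * Complex.exp (n * θ * Complex.I))
        (∫ θ in (-Real.pi)..Real.pi, (starRingEnd ℂ) (f θ) * Complex.exp (n * θ * Complex.I)) := by
      apply intervalIntegral.hasSum_integral_of_dominated_convergence (fun m _ => ‖a m‖)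
      · intro m; apply Continuous.aestronglyMeasurable; fun_prop
      · intro m
        refine Filter.Eventually.of_forall fun θ _ => ?_
        rw [norm_mul, RCLike.norm_conj, hnorm]
        have : ((n : ℂ) * θ * Complex.I) = ((n * θ : ℝ) : ℂ) * Complex.I := by push_cast; ring
        rw [this, Complex.norm_exp_ofReal_mul_I, mul_one]
      · exact Filter.Eventually.of_forall fun θ _ => ha
      · simp
      · refine Filter.Eventually.of_forall fun θ _ => ?_
        exact ((Complex.hasSum_conj'.2 (hf θ))).mul_right _
    have h2 : ∀ m : ℕ, ∫ θ in (-Real.pi)..Real.pi,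
        (starRingEnd ℂ) (a m * Complex.exp (m * θ * Complex.I)) * Complex.exp (n * θ * Complex.I)
        = if m = n then (2 * Real.pi : ℂ) * (starRingEnd ℂ) (a n) else 0 := by
      intro m
      have : ∀ θ : ℝ, (starRingEnd ℂ) (a m * Complex.exp (m * θ * Complex.I)) *
          Complex.exp (n * θ * Complex.I) = (starRingEnd ℂ) (a m) *
          (Complex.exp (n * θ * Complex.I) * (starRingEnd ℂ) (Complex.exp (m * θ * Complex.I))) := by
        intro θ; rw [map_mul]; ring
      simp_rw [this]
      rw [intervalIntegral.integral_const_mul, aux_orth]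
      by_cases h : n = m
      · subst h; simp; ring
      · simp [h, Ne.symm h]
    simp_rw [h2] at h1
    have h3 := hasSum_ite_eq n ((2 * Real.pi : ℂ) * (starRingEnd ℂ) (a n))
    exact h1.unique h3
  obtain ⟨M, hM⟩ : ∃ M, ∀ θ, ‖f θ‖ ≤ M := by
    refine ⟨∑' n, ‖a n‖, fun θ => ?_⟩
    rw [← (hf θ).tsum_eq]
    refine (norm_tsum_le_tsum_norm ?_).trans ?_
    · simp_rw [hnorm]; exact ha
    · simp_rw [hnorm]; exact le_rfl
  have h1 : HasSum (fun n => ∫ θ in (-Real.pi)..Real.pi,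
      (starRingEnd ℂ) (f θ) * (a n * Complex.exp (n * θ * Complex.I)))
      (∫ θ in (-Real.pi)..Real.pi, (starRingEnd ℂ) (f θ) * f θ) := by
    apply intervalIntegral.hasSum_integral_of_dominated_convergence (fun m _ => M * ‖a m‖)
    · intro m; apply Continuous.aestronglyMeasurable; fun_prop
    · intro m
      refine Filter.Eventually.of_forall fun θ _ => ?_
      rw [norm_mul, RCLike.norm_conj, hnorm]
      gcongr
      exact hM θ
    · exact Filter.Eventually.of_forall fun θ _ => ha.mul_left _
    · simp
    · exact Filter.Eventually.of_forall fun θ _ => (hf θ).mul_left _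
  have h2 : ∀ n : ℕ, ∫ θ in (-Real.pi)..Real.pi,
      (starRingEnd ℂ) (f θ) * (a n * Complex.exp (n * θ * Complex.I)) =
      (((2 * Real.pi) * ‖a n‖ ^ 2 : ℝ) : ℂ) := by
    intro n
    have : ∀ θ : ℝ, (starRingEnd ℂ) (f θ) * (a n * Complex.exp (n * θ * Complex.I)) =
        a n * ((starRingEnd ℂ) (f θ) * Complex.exp (n * θ * Complex.I)) := by intro θ; ring
    simp_rw [this]
    rw [intervalIntegral.integral_const_mul, inner]
    push_cast
    rw [← Complex.mul_conj']
    ring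
  have h3 : ∀ θ : ℝ, (starRingEnd ℂ) (f θ) * f θ = ((‖f θ‖ ^ 2 : ℝ) : ℂ) := by
    intro θ; rw [Complex.conj_mul']; push_cast; rfl
  simp_rw [h2, h3] at h1
  rw [intervalIntegral.integral_ofReal] at h1
  exact_mod_cast h1

theorem aux_nn_sq (v : ℂ) : ((‖v‖₊ : ℝ≥0∞)) ^ 2 = ENNReal.ofReal (‖v‖ ^ 2) := by
  rw [ENNReal.ofReal_pow (norm_nonneg _), ofReal_norm]; rfl

theorem aux_parseval {a : ℕ → ℂ} (ha : Summable fun n => ‖a n‖) {f : ℝ → ℂ}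
    (hf : ∀ θ : ℝ, HasSum (fun n : ℕ => a n * Complex.exp (n * θ * Complex.I)) (f θ)) :
    ∫⁻ θ in Ioo (-Real.pi) Real.pi, (‖f θ‖₊ : ℝ≥0∞) ^ 2 =
      ∑' n, ENNReal.ofReal ((2 * Real.pi) * ‖a n‖ ^ 2) := by
  obtain ⟨hc, hs⟩ := aux_parseval_real ha hf
  have hpi := Real.pi_pos
  rw [← ENNReal.ofReal_tsum_of_nonneg (fun n => by positivity) hs.summable, hs.tsum_eq,
    intervalIntegral.integral_of_le (by linarith), integral_Ioc_eq_integral_Ioo,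
    ofReal_integral_eq_lintegral_ofReal]
  · simp_rw [aux_nn_sq]
  · have : ContinuousOn (fun θ => ‖f θ‖ ^ 2) (Icc (-Real.pi) Real.pi) := by fun_prop
    exact this.integrableOn_Icc.mono_set Ioo_subset_Icc_self
  · exact Filter.Eventually.of_forall fun θ => by positivity

theorem aux_J_real {x : ℝ} (hx : 0 < x) (n : ℕ) :
    IntervalIntegrable (fun r : ℝ => r ^ (2 * n + 1) * (√(x ^ 2 - 2 * r ^ 2))⁻¹) volume 0 (x / √2) ∧
    ∫ r in (0 : ℝ)..(x / √2), r ^ (2 * n + 1) * (√(x ^ 2 - 2 * r ^ 2))⁻¹ =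
      2 ^ n * (n.factorial : ℝ) ^ 2 * x ^ (2 * n + 1) / (2 * (2 * n + 1).factorial) := by
  set R : ℝ := x / √2 with hR
  have hR0 : 0 < R := by positivity
  have hR2 : 2 * R ^ 2 = x ^ 2 := by
    rw [hR, div_pow, Real.sq_sqrt (by norm_num)]; ring
  have hpos : ∀ r ∈ Ioo 0 R, 0 < x ^ 2 - 2 * r ^ 2 := by
    intro r hr
    have := pow_lt_pow_left₀ hr.2 hr.1.le two_ne_zero
    linarith
  have hder : ∀ r ∈ Ioo 0 R, HasDerivAt (fun r : ℝ => √(x ^ 2 - 2 * r ^ 2))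
      (-(2 * r) * (√(x ^ 2 - 2 * r ^ 2))⁻¹) r := by
    intro r hr
    have h1 : HasDerivAt (fun r : ℝ => x ^ 2 - 2 * r ^ 2) (-(4 * r)) r := by
      have := ((hasDerivAt_pow 2 r).const_mul 2).const_sub (x ^ 2)
      refine this.congr_deriv ?_
      simp; ring
    refine (h1.sqrt (hpos r hr).ne').congr_deriv ?_
    have := Real.sqrt_pos.2 (hpos r hr)
    field_simp
    ring
  have hbase : IntervalIntegrable (fun r : ℝ => r * (√(x ^ 2 - 2 * r ^ 2))⁻¹) volume 0 R := by
    rw [intervalIntegrable_iff_integrableOn_Ioc_of_le hR0.le]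
    apply intervalIntegral.integrableOn_deriv_of_nonneg
      (g := fun r : ℝ => -(1 / 2) * √(x ^ 2 - 2 * r ^ 2)) (by fun_prop)
    · intro r hr
      refine ((hder r hr).const_mul (-(1 / 2) : ℝ)).congr_deriv ?_
      ring
    · intro r hr
      have := hr.1
      positivity
  have hIntg : ∀ n : ℕ, IntervalIntegrable
      (fun r : ℝ => r ^ (2 * n + 1) * (√(x ^ 2 - 2 * r ^ 2))⁻¹) volume 0 R := by
    intro n
    have := hbase.continuousOn_mul (g := fun r : ℝ => r ^ (2 * n)) (by fun_prop)
    refine this.congr (fun r _ => ?_)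
    ring
  refine ⟨hIntg n, ?_⟩
  induction n with
  | zero =>
    have := intervalIntegral.integral_eq_sub_of_hasDerivAt_of_le hR0.le
      (f := fun r : ℝ => -(1 / 2) * √(x ^ 2 - 2 * r ^ 2)) (by fun_prop)
      (f' := fun r : ℝ => r * (√(x ^ 2 - 2 * r ^ 2))⁻¹) (fun r hr =>
        ((hder r hr).const_mul (-(1 / 2) : ℝ)).congr_deriv (by ring)) hbase
    simp only [mul_zero, zero_add, pow_one, pow_zero, Nat.factorial_zero, Nat.factorial_one]
    rw [this, hR2]
    simp [Real.sqrt_sq hx.le]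
    ring
  | succ n ih =>
    have hstep := intervalIntegral.integral_eq_sub_of_hasDerivAt_of_le hR0.le
      (f := fun r : ℝ => -(1 / 2) * (r ^ (2 * n + 2) * √(x ^ 2 - 2 * r ^ 2))) (by fun_prop)
      (f' := fun r : ℝ => (2 * n + 3) * (r ^ (2 * (n + 1) + 1) * (√(x ^ 2 - 2 * r ^ 2))⁻¹)
        - (n + 1) * x ^ 2 * (r ^ (2 * n + 1) * (√(x ^ 2 - 2 * r ^ 2))⁻¹)) (fun r hr => by
        have h1 := (((hasDerivAt_pow (2 * n + 2) r).mul (hder r hr)).const_mul (-(1 / 2) : ℝ))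
        refine h1.congr_deriv ?_
        have hs := Real.sqrt_pos.2 (hpos r hr)
        have hs2 := Real.sq_sqrt (hpos r hr).le
        have e : 2 * n + 2 - 1 = 2 * n + 1 := by omega
        rw [e]
        generalize √(x ^ 2 - 2 * r ^ 2) = s at *
        have hx2 : x ^ 2 = s ^ 2 + 2 * r ^ 2 := by linarith
        rw [hx2]
        push_cast
        field_simp
        ring) (((hIntg (n + 1)).const_mul _).sub ((hIntg n).const_mul _))
    rw [intervalIntegral.integral_sub ((hIntg (n + 1)).const_mul _) ((hIntg n).const_mul _),
      intervalIntegral.integral_const_mul, intervalIntegral.integral_const_mul, ih, hR2] at hstep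
    simp only [sub_self, Real.sqrt_zero, mul_zero, ne_eq, Nat.add_eq_zero_iff, OfNat.ofNat_ne_zero,
      and_false, not_false_eq_true, zero_pow, zero_mul] at hstep
    have e1 : (2 * (n + 1) + 1).factorial = (2 * n + 3) * ((2 * n + 2) * (2 * n + 1).factorial) := by
      have : 2 * (n + 1) + 1 = (2 * n + 2) + 1 := by ring
      rw [this, Nat.factorial_succ, Nat.factorial_succ]
    have h3 : (0 : ℝ) < 2 * n + 3 := by positivity
    have : (2 * (n : ℝ) + 3) * ∫ r in (0 : ℝ)..R, r ^ (2 * (n + 1) + 1) * (√(x ^ 2 - 2 * r ^ 2))⁻¹ =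
      (2 * n + 3) * (2 ^ (n + 1) * ((n + 1).factorial : ℝ) ^ 2 * x ^ (2 * (n + 1) + 1)
        / (2 * (2 * (n + 1) + 1).factorial)) := by
      rw [sub_eq_zero] at hstep
      rw [hstep, e1, Nat.factorial_succ n]
      push_cast
      field_simp
      ring
    exact mul_left_cancel₀ h3.ne' this

theorem aux_J {x : ℝ} (hx : 0 < x) (n : ℕ) :
    ∫⁻ r in Ioi (0 : ℝ), ENNReal.ofReal (r ^ (2 * n + 1)) *
      ENNReal.ofReal ((√(x ^ 2 - 2 * r ^ 2))⁻¹) =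
    ENNReal.ofReal (2 ^ n * (n.factorial : ℝ) ^ 2 * x ^ (2 * n + 1) / (2 * (2 * n + 1).factorial)) := by
  obtain ⟨h1, h2⟩ := aux_J_real hx n
  have hR0 : 0 < x / √2 := by positivity
  rw [← h2, intervalIntegral.integral_of_le hR0.le, ofReal_integral_eq_lintegral_ofReal
    ((intervalIntegrable_iff_integrableOn_Ioc_of_le hR0.le).1 h1)]
  · rw [← lintegral_indicator measurableSet_Ioi, ← lintegral_indicator measurableSet_Ioc]
    congr 1
    ext r
    by_cases hr : 0 < r
    · by_cases hr2 : r ≤ x / √2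
      · rw [indicator_of_mem (show r ∈ Ioi 0 from hr), indicator_of_mem (show r ∈ Ioc 0 (x / √2) from ⟨hr, hr2⟩),
          ENNReal.ofReal_mul (by positivity)]
      · rw [indicator_of_mem (show r ∈ Ioi 0 from hr), indicator_of_notMem (show r ∉ Ioc 0 (x / √2) from fun h => hr2 h.2)]
        have : √(x ^ 2 - 2 * r ^ 2) = 0 := by
          apply Real.sqrt_eq_zero_of_nonpos
          have := pow_lt_pow_left₀ (not_le.1 hr2) hR0.le two_ne_zero
          rw [div_pow, Real.sq_sqrt (by norm_num)] at this
          linarith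
        simp [this]
    · rw [indicator_of_notMem (show r ∉ Ioi 0 from hr), indicator_of_notMem (show r ∉ Ioc 0 (x / √2) from fun h => hr h.1)]
  · refine (ae_restrict_iff' measurableSet_Ioc).2 (Filter.Eventually.of_forall fun r hr => ?_)
    have := hr.1
    positivity

/-- The weight. -/
noncomputable def wgt (x : ℝ) (z : ℂ) : ℝ≥0∞ := ENNReal.ofReal ((√(x ^ 2 - 2 * ‖z - x‖ ^ 2))⁻¹)

theorem measurable_wgt : Measurable (fun p : ℝ × ℂ => wgt p.1 p.2) := by
  unfold wgt
  apply ENNReal.measurable_ofReal.comp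
  apply Measurable.inv
  apply Continuous.measurable
  fun_prop

theorem aux_disc {G : ℂ → ℂ} (hGm : Measurable G) {x : ℝ} (hx : 0 < x) {a : ℕ → ℂ}
    (hG : ∀ z ∈ discB x, HasSum (fun n : ℕ => a n * (z - x) ^ n) (G z)) :
    ∫⁻ z, (‖G z‖₊ : ℝ≥0∞) ^ 2 * wgt x z =
      ∑' n : ℕ, ENNReal.ofReal (Real.pi * (2 ^ n / (2 * n + 1).factorial * (x ^ (2 * n + 1) *
        ((n.factorial : ℝ) ^ 2 * ‖a n‖ ^ 2)))) := by
  have hpi := Real.pi_pos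
  have hmeas : Measurable (fun z : ℂ => (‖G z‖₊ : ℝ≥0∞) ^ 2 * wgt x z) :=
    (hGm.nnnorm.coe_nnreal_ennreal.pow_const 2).mul (measurable_wgt.comp measurable_prodMk_left)
  rw [← lintegral_add_right_eq_self _ (x : ℂ), ← Complex.lintegral_comp_polarCoord_symm]
  have htarget : polarCoord.target = Ioi (0 : ℝ) ×ˢ Ioo (-Real.pi) Real.pi := rfl
  rw [htarget, Measure.volume_eq_prod, ← Measure.prod_restrict, lintegral_prod]
  swap
  · apply Measurable.aemeasurable
    simp only [smul_eq_mul]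
    refine Measurable.fun_mul (by fun_prop) ?_
    apply hmeas.comp
    have hps : (fun p : ℝ × ℝ => Complex.polarCoord.symm p + (x : ℂ)) =
        fun p : ℝ × ℝ => (p.1 : ℂ) * (Real.cos p.2 + Real.sin p.2 * Complex.I) + x := by
      funext p
      rw [Complex.polarCoord_symm_apply]
    rw [hps]
    fun_prop
  have hinner : ∀ r ∈ Ioi (0 : ℝ), ∫⁻ θ in Ioo (-Real.pi) Real.pi, ENNReal.ofReal (r, θ).1 •
      ((‖G (Complex.polarCoord.symm (r, θ) + x)‖₊ : ℝ≥0∞) ^ 2 *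
        wgt x (Complex.polarCoord.symm (r, θ) + x)) =
      ∑' n : ℕ, ENNReal.ofReal (2 * Real.pi * ‖a n‖ ^ 2) * (ENNReal.ofReal (r ^ (2 * n + 1)) *
        ENNReal.ofReal ((√(x ^ 2 - 2 * r ^ 2))⁻¹)) := by
    intro r hr
    have hr0 : 0 < r := hr
    have hz : ∀ θ : ℝ, Complex.polarCoord.symm (r, θ) = r * Complex.exp (θ * Complex.I) := by
      intro θ
      rw [Complex.polarCoord_symm_apply, Complex.exp_mul_I]
      simp
    have hnz : ∀ θ : ℝ, ‖Complex.polarCoord.symm (r, θ) + x - x‖ = r := by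
      intro θ
      rw [hz, add_sub_cancel_right, norm_mul, Complex.norm_exp_ofReal_mul_I, mul_one,
        Complex.norm_real, Real.norm_eq_abs, abs_of_pos hr0]
    simp only [wgt, hnz, smul_eq_mul]
    by_cases hrx : 2 * r ^ 2 < x ^ 2
    · have hmem : ∀ θ : ℝ, Complex.polarCoord.symm (r, θ) + x ∈ discB x := by
        intro θ
        simp only [discB, mem_ofPred_eq, hnz]
        exact hrx
      have hP := aux_parseval (a := fun n => a n * (r : ℂ) ^ n)
        (f := fun θ => G (Complex.polarCoord.symm (r, θ) + x)) ?_ ?_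
      · have hcomm : ∀ θ : ℝ, ENNReal.ofReal r *
            ((‖G (Complex.polarCoord.symm (r, θ) + x)‖₊ : ℝ≥0∞) ^ 2 *
              ENNReal.ofReal ((√(x ^ 2 - 2 * r ^ 2))⁻¹)) =
            (ENNReal.ofReal r * ENNReal.ofReal ((√(x ^ 2 - 2 * r ^ 2))⁻¹)) *
            (‖G (Complex.polarCoord.symm (r, θ) + x)‖₊ : ℝ≥0∞) ^ 2 := by
          intro θ; ring
        simp_rw [hcomm]
        rw [lintegral_const_mul' _ _ (ENNReal.mul_ne_top ENNReal.ofReal_ne_top ENNReal.ofReal_ne_top),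
          hP, ← ENNReal.tsum_mul_left]
        congr 1
        ext n
        rw [← ENNReal.ofReal_mul (by positivity), ← ENNReal.ofReal_mul (by positivity),
          ← ENNReal.ofReal_mul (by positivity), ← ENNReal.ofReal_mul (by positivity)]
        congr 1
        rw [norm_mul, norm_pow, Complex.norm_real, Real.norm_eq_abs, abs_of_pos hr0]
        ring
      · have h1 := (hG _ (hmem 0)).summable.norm
        refine h1.congr (fun n => ?_)
        rw [add_sub_cancel_right, hz]
        simp
      · intro θ
        have h1 := hG _ (hmem θ)
        rw [add_sub_cancel_right, hz] at h1
        have h2 : ∀ n : ℕ, a n * (r : ℂ) ^ n * Complex.exp (n * θ * Complex.I) =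
            a n * (r * Complex.exp (θ * Complex.I)) ^ n := by
          intro n
          rw [mul_pow, ← Complex.exp_nat_mul, mul_assoc, mul_assoc]
        simpa only [h2, hz] using h1
    · have h0 : √(x ^ 2 - 2 * r ^ 2) = 0 := Real.sqrt_eq_zero_of_nonpos (by linarith)
      simp [h0]
  rw [setLIntegral_congr_fun measurableSet_Ioi hinner, lintegral_tsum]
  · congr 1
    ext n
    rw [lintegral_const_mul' _ _ ENNReal.ofReal_ne_top, aux_J hx, ← ENNReal.ofReal_mul (by positivity)]
    congr 1
    field_simp
  · intro n
    apply Measurable.aemeasurable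
    apply Measurable.const_mul
    apply Measurable.fun_mul
    · fun_prop
    · apply ENNReal.measurable_ofReal.comp
      apply Measurable.inv
      apply Continuous.measurable
      fun_prop

theorem aux_quad (x : ℝ) (z : ℂ) :
    x ^ 2 - 2 * ‖z - x‖ ^ 2 = 2 * (z.re ^ 2 - z.im ^ 2) - (x - 2 * z.re) ^ 2 := by
  rw [Complex.sq_norm, Complex.normSq_apply]
  simp
  ring

theorem aux_arcsin {A c : ℝ} (hA : 0 < A) :
    ∫⁻ x : ℝ, ENNReal.ofReal ((√(A ^ 2 - (x - c) ^ 2))⁻¹) ≤ ENNReal.ofReal Real.pi := by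
  have hle : c - A ≤ c + A := by linarith
  have hpos : ∀ x ∈ Ioo (c - A) (c + A), 0 < A ^ 2 - (x - c) ^ 2 := by
    intro x hx
    have : A ^ 2 - (x - c) ^ 2 = (A - (x - c)) * (A + (x - c)) := by ring
    rw [this]
    apply mul_pos <;> linarith [hx.1, hx.2]
  have hder : ∀ x ∈ Ioo (c - A) (c + A), HasDerivAt (fun x : ℝ => Real.arcsin ((x - c) / A))
      ((√(A ^ 2 - (x - c) ^ 2))⁻¹) x := by
    intro x hx
    have h1 : HasDerivAt (fun x : ℝ => (x - c) / A) (1 / A) x :=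
      ((hasDerivAt_id x).sub_const c).div_const A
    have hn : (x - c) / A ≠ -1 := by
      intro h; rw [div_eq_iff hA.ne'] at h; linarith [hx.1]
    have hp : (x - c) / A ≠ 1 := by
      intro h; rw [div_eq_iff hA.ne'] at h; linarith [hx.2]
    refine ((Real.hasDerivAt_arcsin hn hp).comp x h1).congr_deriv ?_
    have e : 1 - ((x - c) / A) ^ 2 = (A ^ 2 - (x - c) ^ 2) / A ^ 2 := by field_simp
    rw [e, Real.sqrt_div' _ (by positivity), Real.sqrt_sq hA.le]
    have := Real.sqrt_pos.2 (hpos x hx)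
    field_simp
  have hcont : ContinuousOn (fun x : ℝ => Real.arcsin ((x - c) / A)) (Icc (c - A) (c + A)) := by
    apply Continuous.continuousOn
    exact Real.continuous_arcsin.comp (by fun_prop)
  have hIntg : IntegrableOn (fun x : ℝ => (√(A ^ 2 - (x - c) ^ 2))⁻¹) (Ioc (c - A) (c + A)) := by
    apply intervalIntegral.integrableOn_deriv_of_nonneg hcont hder
    intro x _; positivity
  have hval := intervalIntegral.integral_eq_sub_of_hasDerivAt_of_le hle hcont hder
    ((intervalIntegrable_iff_integrableOn_Ioc_of_le hle).2 hIntg)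
  have e1 : (c + A - c) / A = 1 := by field_simp; ring
  have e2 : (c - A - c) / A = -1 := by field_simp; ring
  rw [e1, e2, Real.arcsin_one, Real.arcsin_neg_one] at hval
  have hval' : ∫ x in (c - A)..(c + A), (√(A ^ 2 - (x - c) ^ 2))⁻¹ = Real.pi := by
    rw [hval]; ring
  rw [← hval', intervalIntegral.integral_of_le hle, ofReal_integral_eq_lintegral_ofReal hIntg
    (Filter.Eventually.of_forall fun x => by positivity), ← lintegral_indicator measurableSet_Ioc]
  apply lintegral_mono
  intro x
  by_cases hx : x ∈ Ioc (c - A) (c + A)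
  · rw [indicator_of_mem hx]
  · have : √(A ^ 2 - (x - c) ^ 2) = 0 := by
      apply Real.sqrt_eq_zero_of_nonpos
      by_contra hcon
      rw [not_le] at hcon
      have := abs_lt_of_sq_lt_sq (a := x - c) (b := A) (by linarith) hA.le
      rw [abs_lt] at this
      exact hx ⟨by linarith [this.1], by linarith [this.2]⟩
    simp [this]

/-- The kernel. -/
noncomputable def kern (z : ℂ) : ℝ≥0∞ := ∫⁻ x in Ioo (0 : ℝ) (1 / 2), wgt x z

theorem kern_le (z : ℂ) : kern z ≤ ENNReal.ofReal Real.pi := by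
  refine (setLIntegral_le_lintegral _ _).trans ?_
  simp only [wgt, aux_quad]
  by_cases h : 0 < 2 * (z.re ^ 2 - z.im ^ 2)
  · have := aux_arcsin (A := √(2 * (z.re ^ 2 - z.im ^ 2))) (c := 2 * z.re) (Real.sqrt_pos.2 h)
    rwa [Real.sq_sqrt h.le] at this
  · have : ∀ x : ℝ, √(2 * (z.re ^ 2 - z.im ^ 2) - (x - 2 * z.re) ^ 2) = 0 := by
      intro x
      apply Real.sqrt_eq_zero_of_nonpos
      nlinarith [sq_nonneg (x - 2 * z.re)]
    simp [this]

/-- The quarter square. -/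
def quartQ : Set ℂ := {z : ℂ | 0 < z.re + z.im ∧ 0 < z.re - z.im ∧
  z.re + z.im ≤ 1 / 2 ∧ z.re - z.im ≤ 1 / 2}

theorem aux_quart {z : ℂ} (hz : z ∈ quartQ) : ∃ A : ℝ, 0 < A ∧ A ^ 2 = 2 * (z.re ^ 2 - z.im ^ 2) ∧
    0 < 2 * z.re - A ∧ 2 * z.re - A / √2 ≤ 1 / 2 := by
  obtain ⟨hu, hv, hu2, hv2⟩ := hz
  obtain ⟨u, hu'⟩ : ∃ u, u = z.re + z.im := ⟨_, rfl⟩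
  obtain ⟨v, hv'⟩ : ∃ v, v = z.re - z.im := ⟨_, rfl⟩
  rw [← hu'] at hu hu2
  rw [← hv'] at hv hv2
  have e1 : 2 * (z.re ^ 2 - z.im ^ 2) = 2 * (u * v) := by rw [hu', hv']; ring
  have e2 : 2 * z.re = u + v := by rw [hu', hv']; ring
  have huv : 0 < u * v := mul_pos hu hv
  refine ⟨√2 * √(u * v), by positivity, ?_, ?_, ?_⟩
  · rw [mul_pow, Real.sq_sqrt (by norm_num), Real.sq_sqrt huv.le, e1]
  · rw [e2, sub_pos]
    apply lt_of_pow_lt_pow_left₀ 2 (by positivity)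
    rw [mul_pow, Real.sq_sqrt (by norm_num), Real.sq_sqrt huv.le]
    nlinarith
  · have : √2 * √(u * v) / √2 = √(u * v) := by field_simp
    rw [this, e2]
    rcases le_total u v with h | h
    · have : u ≤ √(u * v) := Real.le_sqrt_of_sq_le (by nlinarith)
      linarith
    · have : v ≤ √(u * v) := Real.le_sqrt_of_sq_le (by nlinarith)
      linarith

theorem aux_eps : 0 < 1 - 1 / √2 := by
  rw [sub_pos, div_lt_one (by positivity)]
  exact Real.lt_sqrt_of_sq_lt (by norm_num)

theorem quartQ_subset : quartQ ⊆ coneU := by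
  intro z hz
  obtain ⟨A, hA, hA2, h1, h2⟩ := aux_quart hz
  have heps := aux_eps
  have hlt : 2 * z.re - A < 2 * z.re - A / √2 := by
    have : A / √2 = A * (1 / √2) := by ring
    nlinarith
  obtain ⟨x, hx1, hx2⟩ := exists_between hlt
  have hA3 : 0 < A / √2 := by positivity
  refine ⟨x, ⟨by linarith, by linarith⟩, ?_⟩
  have := aux_quad x z
  simp only [discB, mem_ofPred_eq]
  rw [← hA2] at this
  nlinarith

theorem le_kern {z : ℂ} (hz : z ∈ quartQ) : ENNReal.ofReal (1 - 1 / √2) ≤ kern z := by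
  obtain ⟨A, hA, hA2, h1, h2⟩ := aux_quart hz
  have hA3 : 0 < A / √2 := by positivity
  have hsub : Ioo (2 * z.re - A) (2 * z.re - A / √2) ⊆ Ioo (0 : ℝ) (1 / 2) :=
    fun x hx => ⟨by linarith [hx.1], by linarith [hx.2]⟩
  unfold kern
  refine le_trans ?_ (lintegral_mono_set hsub)
  have h3 : ∫⁻ x in Ioo (2 * z.re - A) (2 * z.re - A / √2), ENNReal.ofReal (1 / A) =
      ENNReal.ofReal (1 - 1 / √2) := by
    rw [setLIntegral_const, Real.volume_Ioo, ← ENNReal.ofReal_mul (by positivity)]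
    congr 1
    field_simp
    ring
  rw [← h3]
  apply setLIntegral_mono' measurableSet_Ioo
  intro x hx
  simp only [wgt, aux_quad, ← hA2]
  apply ENNReal.ofReal_le_ofReal
  rw [one_div]
  have hp : 0 < A ^ 2 - (x - 2 * z.re) ^ 2 := by nlinarith [hx.1, hx.2]
  apply inv_anti₀ (Real.sqrt_pos.2 hp)
  rw [Real.sqrt_le_left hA.le]
  nlinarith [sq_nonneg (x - 2 * z.re)]

/-- One-corner sum. -/
noncomputable def cornerS (d : ℕ → ℝ → ℂ) : ℝ≥0∞ :=
  ∑' n : ℕ, ENNReal.ofReal ((2 : ℝ) ^ n / (Nat.factorial (2 * n + 1) : ℝ)) *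
    ∫⁻ x in Ioo (0 : ℝ) (1 / 2), ENNReal.ofReal (x ^ (2 * n + 1)) * (‖d n x‖₊ : ℝ≥0∞) ^ 2

theorem aux_corner_eq {d : ℕ → ℝ → ℂ} (hdc : ∀ n, ContinuousOn (d n) (Ioo (0 : ℝ) (1 / 2)))
    {G : ℂ → ℂ} (hGm : Measurable G)
    (hG : ∀ x ∈ Ioo (0 : ℝ) (1 / 2), ∀ z ∈ discB x,
      HasSum (fun n : ℕ => d n x / (n.factorial : ℂ) * (z - x) ^ n) (G z)) :
    ENNReal.ofReal Real.pi * cornerS d = ∫⁻ z, (‖G z‖₊ : ℝ≥0∞) ^ 2 * kern z := by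
  have hpi := Real.pi_pos
  have h1 : ∫⁻ z, (‖G z‖₊ : ℝ≥0∞) ^ 2 * kern z =
      ∫⁻ x in Ioo (0 : ℝ) (1 / 2), ∫⁻ z, (‖G z‖₊ : ℝ≥0∞) ^ 2 * wgt x z := by
    rw [lintegral_lintegral_swap]
    · congr 1
      ext z
      rw [kern, lintegral_const_mul]
      exact measurable_wgt.comp measurable_prodMk_right
    · apply Measurable.aemeasurable
      exact ((hGm.comp measurable_snd).nnnorm.coe_nnreal_ennreal.pow_const 2).mul measurable_wgt
  rw [h1, setLIntegral_congr_fun measurableSet_Ioo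
    (fun x hx => aux_disc hGm hx.1 (hG x hx)), lintegral_tsum]
  · rw [cornerS, ← ENNReal.tsum_mul_left]
    congr 1
    ext n
    rw [← mul_assoc, ← ENNReal.ofReal_mul hpi.le, ← lintegral_const_mul' _ _ ENNReal.ofReal_ne_top]
    apply setLIntegral_congr_fun measurableSet_Ioo
    intro x hx
    have hx0 := hx.1
    simp only [aux_nn_sq]
    rw [← ENNReal.ofReal_mul (by positivity), ← ENNReal.ofReal_mul (by positivity)]
    congr 1
    rw [norm_div, Complex.norm_natCast]
    field_simp
  · intro n
    have : ContinuousOn (fun x : ℝ => Real.pi * (2 ^ n / (2 * n + 1).factorial * (x ^ (2 * n + 1) *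
        ((n.factorial : ℝ) ^ 2 * ‖d n x / (n.factorial : ℂ)‖ ^ 2)))) (Ioo (0 : ℝ) (1 / 2)) := by
      have := hdc n
      fun_prop (disch := simp [Nat.factorial_ne_zero])
    exact (this.aemeasurable measurableSet_Ioo).ennreal_ofReal

theorem aux_wgt_zero {x : ℝ} {z : ℂ} (h : z ∉ discB x) : wgt x z = 0 := by
  simp only [discB, mem_ofPred_eq, not_lt] at h
  rw [wgt, Real.sqrt_eq_zero_of_nonpos (by linarith)]
  simp

theorem aux_corner_le {d : ℕ → ℝ → ℂ} (hdc : ∀ n, ContinuousOn (d n) (Ioo (0 : ℝ) (1 / 2)))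
    {G : ℂ → ℂ} (hGm : Measurable G) (hG0 : ∀ z, z ∉ coneU → G z = 0)
    (hG : ∀ x ∈ Ioo (0 : ℝ) (1 / 2), ∀ z ∈ discB x,
      HasSum (fun n : ℕ => d n x / (n.factorial : ℂ) * (z - x) ^ n) (G z)) :
    cornerS d ≤ ∫⁻ z in coneU, (‖G z‖₊ : ℝ≥0∞) ^ 2 := by
  have h := aux_corner_eq hdc hGm hG
  have h2 : ENNReal.ofReal Real.pi * cornerS d ≤
      ENNReal.ofReal Real.pi * ∫⁻ z in coneU, (‖G z‖₊ : ℝ≥0∞) ^ 2 := by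
    rw [h, ← lintegral_const_mul' _ _ ENNReal.ofReal_ne_top,
      ← lintegral_indicator isOpen_coneU.measurableSet]
    apply lintegral_mono
    intro z
    by_cases hz : z ∈ coneU
    · rw [indicator_of_mem hz, mul_comm (ENNReal.ofReal Real.pi)]
      exact mul_le_mul' le_rfl (kern_le z)
    · simp [hG0 z hz]
  exact (ENNReal.mul_le_mul_iff_right (by simp [Real.pi_pos]) ENNReal.ofReal_ne_top).1 h2

theorem measurableSet_quartQ : MeasurableSet quartQ := by
  have h1 : Measurable (fun z : ℂ => z.re + z.im) := by fun_prop
  have h2 : Measurable (fun z : ℂ => z.re - z.im) := by fun_prop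
  exact (measurableSet_lt measurable_const h1).inter ((measurableSet_lt measurable_const h2).inter
    ((measurableSet_le h1 measurable_const).inter (measurableSet_le h2 measurable_const)))

theorem aux_corner_ge {d : ℕ → ℝ → ℂ} (hdc : ∀ n, ContinuousOn (d n) (Ioo (0 : ℝ) (1 / 2)))
    {G : ℂ → ℂ} (hGm : Measurable G)
    (hG : ∀ x ∈ Ioo (0 : ℝ) (1 / 2), ∀ z ∈ discB x,
      HasSum (fun n : ℕ => d n x / (n.factorial : ℂ) * (z - x) ^ n) (G z)) :
    ENNReal.ofReal ((1 - 1 / √2) / Real.pi) * ∫⁻ z in quartQ, (‖G z‖₊ : ℝ≥0∞) ^ 2 ≤ cornerS d := by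
  have h := aux_corner_eq hdc hGm hG
  have heps := aux_eps
  have hpi := Real.pi_pos
  have h2 : ENNReal.ofReal Real.pi * (ENNReal.ofReal ((1 - 1 / √2) / Real.pi) *
      ∫⁻ z in quartQ, (‖G z‖₊ : ℝ≥0∞) ^ 2) ≤ ENNReal.ofReal Real.pi * cornerS d := by
    rw [h, ← mul_assoc, ← ENNReal.ofReal_mul hpi.le, mul_div_cancel₀ _ hpi.ne',
      ← lintegral_const_mul' _ _ ENNReal.ofReal_ne_top, ← lintegral_indicator measurableSet_quartQ]
    apply lintegral_mono
    intro z
    by_cases hz : z ∈ quartQ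
    · rw [indicator_of_mem hz, mul_comm (ENNReal.ofReal _)]
      exact mul_le_mul' le_rfl (le_kern hz)
    · rw [indicator_of_notMem hz]; exact zero_le
  exact (ENNReal.mul_le_mul_iff_right (by simp [Real.pi_pos]) ENNReal.ofReal_ne_top).1 h2

/-- The four rotation factors. -/
noncomputable def rotv : Fin 4 → ℂ := ![1, -1, -Complex.I, Complex.I]

/-- The conjugate rotation factors. -/
noncomputable def rotw : Fin 4 → ℂ := ![1, -1, Complex.I, -Complex.I]

/-- Rotation about the center. -/
noncomputable def rot (j : Fin 4) (z : ℂ) : ℂ := 1 / 2 + rotv j * (z - 1 / 2)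

/-- Inverse rotation about the center. -/
noncomputable def rotInv (j : Fin 4) (z : ℂ) : ℂ := 1 / 2 + rotw j * (z - 1 / 2)

theorem rotvw (j : Fin 4) : rotv j * rotw j = 1 := by
  fin_cases j <;> simp [rotv, rotw]

theorem norm_rotv (j : Fin 4) : ‖rotv j‖ = 1 := by
  fin_cases j <;> simp [rotv]

theorem norm_rotw (j : Fin 4) : ‖rotw j‖ = 1 := by
  fin_cases j <;> simp [rotw]

theorem rot_rotInv (j : Fin 4) (z : ℂ) : rot j (rotInv j z) = z := by
  have := rotvw j
  unfold rot rotInv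
  linear_combination (z - 1 / 2) * this

theorem rotInv_rot (j : Fin 4) (z : ℂ) : rotInv j (rot j z) = z := by
  have := rotvw j
  unfold rot rotInv
  linear_combination (z - 1 / 2) * this

theorem continuous_rot (j : Fin 4) : Continuous (rot j) := by unfold rot; fun_prop

theorem continuous_rotInv (j : Fin 4) : Continuous (rotInv j) := by unfold rotInv; fun_prop

theorem differentiable_rot (j : Fin 4) : Differentiable ℂ (rot j) := by unfold rot; fun_prop

theorem differentiable_rotInv (j : Fin 4) : Differentiable ℂ (rotInv j) := by
  unfold rotInv; fun_prop

theorem norm_rot_sub (j : Fin 4) (z : ℂ) : ‖rot j z - 1 / 2‖ = ‖z - 1 / 2‖ := by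
  rw [rot, add_sub_cancel_left, norm_mul, norm_rotv, one_mul]

theorem norm_rotInv_sub (j : Fin 4) (z : ℂ) : ‖rotInv j z - 1 / 2‖ = ‖z - 1 / 2‖ := by
  rw [rotInv, add_sub_cancel_left, norm_mul, norm_rotw, one_mul]

theorem measurableEmbedding_rot (j : Fin 4) : MeasurableEmbedding (rot j) :=
  (Homeomorph.mk (Equiv.mk (rot j) (rotInv j) (rotInv_rot j) (rot_rotInv j))
    (continuous_rot j) (continuous_rotInv j)).measurableEmbedding

theorem measurePreserving_rot (j : Fin 4) : MeasurePreserving (rot j) volume volume := by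
  have h1 : MeasurePreserving (fun z : ℂ => z - 1 / 2) volume volume :=
    measurePreserving_sub_right volume _
  have h2 := (rotation ⟨rotv j, by simp [Submonoid.unitSphere, norm_rotv]⟩).measurePreserving
  have h3 : MeasurePreserving (fun z : ℂ => 1 / 2 + z) volume volume :=
    measurePreserving_add_left volume _
  have := h3.comp (h2.comp h1)
  exact this

theorem mem_squareD_rot (j : Fin 4) (z : ℂ) : rot j z ∈ SquareD ↔ z ∈ SquareD := by
  have key : ∀ z : ℂ, z ∈ SquareD ↔ |z.re - 1 / 2| + |z.im| < 1 / 2 := by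
    intro z
    simp only [SquareD, mem_ofPred_eq, lt_min_iff]
    constructor
    · rintro ⟨h1, h2, h3, h4⟩
      rcases abs_cases (z.re - 1 / 2) with h | h <;> linarith
    · intro h
      have := abs_nonneg z.im
      have h5 := le_abs_self (z.re - 1 / 2)
      have h6 := neg_abs_le (z.re - 1 / 2)
      refine ⟨?_, ?_, ?_, ?_⟩ <;> linarith
  rw [key, key]
  fin_cases j <;> simp [rot, rotv]
  · rw [abs_sub_comm]
  · rw [add_comm, abs_sub_comm]
  · rw [add_comm]

theorem coneU_subset : coneU ⊆ SquareD := by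
  rintro z ⟨x, hx, hz⟩
  simp only [discB, mem_ofPred_eq, Complex.sq_norm, Complex.normSq_apply] at hz
  simp at hz
  have hx0 := hx.1
  have hx1 := hx.2
  have h1 : |z.re - x| + |z.im| < x := by
    apply lt_of_pow_lt_pow_left₀ 2 hx.1.le
    have e1 := sq_abs (z.re - x)
    have e2 := sq_abs z.im
    nlinarith [sq_nonneg (|z.re - x| - |z.im|)]
  have := abs_nonneg z.im
  have h5 := le_abs_self (z.re - x)
  have h6 := neg_abs_le (z.re - x)
  simp only [SquareD, mem_ofPred_eq, lt_min_iff]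
  refine ⟨?_, ?_, ?_, ?_⟩ <;> linarith

theorem center_subset : discB (1 / 2) ⊆ coneU := by
  intro z hz
  have hc : Continuous (fun x : ℝ => x ^ 2 - 2 * ‖z - x‖ ^ 2) := by fun_prop
  have h0 : 0 < (1 / 2 : ℝ) ^ 2 - 2 * ‖z - (1 / 2 : ℝ)‖ ^ 2 := by
    simp only [discB, mem_ofPred_eq] at hz
    linarith
  have h1 := (hc.tendsto (1 / 2)).eventually (lt_mem_nhds h0)
  have h2 : ∀ᶠ x : ℝ in nhdsWithin (1 / 2) (Iio (1 / 2)), x ∈ Ioo (0 : ℝ) (1 / 2) :=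
    Ioo_mem_nhdsLT (by norm_num)
  obtain ⟨x, hx1, hx2⟩ := ((h1.filter_mono nhdsWithin_le_nhds).and h2).exists
  refine ⟨x, hx2, ?_⟩
  simp only [discB, mem_ofPred_eq]
  linarith

theorem coneU_sect {z : ℂ} (hz : z ∈ coneU) (hz2 : z ∉ discB (1 / 2)) : |z.im| < 1 / 2 - z.re := by
  obtain ⟨x, hx, hz⟩ := hz
  have hD := coneU_subset ⟨x, hx, hz⟩
  simp only [SquareD, mem_ofPred_eq, lt_min_iff, abs_lt] at hD
  obtain ⟨ha, hb, hc, hd⟩ := hD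
  have q1 := aux_quad x z
  have q2 := aux_quad (1 / 2) z
  simp only [discB, mem_ofPred_eq, not_lt] at hz hz2
  have hx0 := hx.1
  have hx1 := hx.2
  -- `f(1/2) ≤ 0 < f(x)`
  have f1 : 2 * (z.re ^ 2 - z.im ^ 2) ≤ (1 / 2 - 2 * z.re) ^ 2 := by linarith
  have f2 : (x - 2 * z.re) ^ 2 < 2 * (z.re ^ 2 - z.im ^ 2) := by linarith
  have f3 : 2 * z.re < 1 / 2 := by nlinarith
  rw [abs_lt]
  by_contra hcon
  have hcases : 1 / 2 ≤ z.re + z.im ∨ 1 / 2 ≤ z.re - z.im := by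
    by_contra h
    rw [not_or, not_le, not_le] at h
    exact hcon ⟨by linarith, by linarith⟩
  rcases hcases with h | h <;> linarith [hc.1, hc.2]

theorem sect_unique (i j : Fin 4) (z : ℂ) (hi : |(rotInv i z).im| < 1 / 2 - (rotInv i z).re)
    (hj : |(rotInv j z).im| < 1 / 2 - (rotInv j z).re) : i = j := by
  rw [abs_lt] at hi hj
  fin_cases i <;> fin_cases j <;> first | rfl | skip
  all_goals
    exfalso
    simp [rotInv, rotw] at hi hj
    linarith [hi.1, hi.2, hj.1, hj.2]

theorem squareD_cover {z : ℂ} (hz : z ∈ SquareD) : ∃ j, rotInv j z ∈ quartQ := by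
  simp only [SquareD, mem_ofPred_eq, lt_min_iff, abs_lt] at hz
  obtain ⟨ha, hb, hc, hd⟩ := hz
  rcases le_total ((z.re - 1 / 2) + z.im) 0 with h1 | h1 <;>
  rcases le_total ((z.re - 1 / 2) - z.im) 0 with h2 | h2
  · refine ⟨0, ?_⟩
    simp [quartQ, rotInv, rotw]
    refine ⟨?_, ?_, ?_, ?_⟩ <;> linarith [hc.1, hc.2, hd.1, hd.2]
  · refine ⟨3, ?_⟩
    simp [quartQ, rotInv, rotw]
    refine ⟨?_, ?_, ?_, ?_⟩ <;> linarith [hc.1, hc.2, hd.1, hd.2]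
  · refine ⟨2, ?_⟩
    simp [quartQ, rotInv, rotw]
    refine ⟨?_, ?_, ?_, ?_⟩ <;> linarith [hc.1, hc.2, hd.1, hd.2]
  · refine ⟨1, ?_⟩
    simp [quartQ, rotInv, rotw]
    refine ⟨?_, ?_, ?_, ?_⟩ <;> linarith [hc.1, hc.2, hd.1, hd.2]

theorem aux_glue {d : Fin 4 → ℕ → ℝ → ℂ}
    (hd : ∀ j n, ∀ x ∈ Ioo (0 : ℝ) (1 / 2), HasDerivAt (d j n) (d j (n + 1) x) x)
    (hS : ∀ j, cornerS (d j) ≠ ⊤) {r : ℝ} (hr : 0 < r) {F₀ : ℂ → ℂ}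
    (hF₀ : DifferentiableOn ℂ F₀ (ball (1 / 2 : ℂ) r))
    (h0 : ∀ j, ∀ x ∈ Ioo (0 : ℝ) (1 / 2), |x - 1 / 2| < r → d j 0 x = F₀ (rot j x)) :
    ∃ F : ℂ → ℂ, DifferentiableOn ℂ F SquareD ∧
      (∀ j, ∀ x ∈ Ioo (0 : ℝ) (1 / 2), F (rot j x) = d j 0 x) ∧ F (1 / 2) = F₀ (1 / 2) ∧
      ENNReal.ofReal ((1 - 1 / √2) / Real.pi) * ∫⁻ z in SquareD, (‖F z‖₊ : ℝ≥0∞) ^ 2 ≤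
        ∑ j, cornerS (d j) ∧
      ∑ j, cornerS (d j) ≤ ENNReal.ofReal 4 * ∫⁻ z in SquareD, (‖F z‖₊ : ℝ≥0∞) ^ 2 := by
  have hdc : ∀ j n, ContinuousOn (d j n) (Ioo (0 : ℝ) (1 / 2)) :=
    fun j n x hx => (hd j n x hx).continuousAt.continuousWithinAt
  have hgr : ∀ j, GrowthC (d j) := fun j x hx ρ hρ hρx =>
    aux_growth (hd j) (hS j) (fun n => ENNReal.le_tsum (f := fun n : ℕ =>
      ENNReal.ofReal ((2 : ℝ) ^ n / (Nat.factorial (2 * n + 1) : ℝ)) *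
      ∫⁻ x in Ioo (0 : ℝ) (1 / 2), ENNReal.ofReal (x ^ (2 * n + 1)) * (‖d j n x‖₊ : ℝ≥0∞) ^ 2) n) hx hρ hρx
  choose G hGd hG0 hGr hGs using fun j => aux_extension (hd j) (hgr j)
  have hGm : ∀ j, Measurable (G j) := by
    intro j
    classical
    have h1 : Measurable (coneU.piecewise (G j) (fun _ => 0)) :=
      (hGd j).continuousOn.measurable_piecewise continuousOn_const isOpen_coneU.measurableSet
    have h2 : coneU.piecewise (G j) (fun _ => 0) = G j := by
      funext z
      by_cases hz : z ∈ coneU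
      · simp [hz]
      · simp [hz, hG0 j z hz]
    rwa [h2] at h1
  have hhalf : ((1 / 2 : ℝ) : ℂ) = 1 / 2 := by norm_num
  have hBdef : ∀ z, z ∈ discB (1 / 2) ↔ 2 * ‖z - 1 / 2‖ ^ 2 < (1 / 2) ^ 2 := by
    intro z
    simp only [discB, mem_ofPred_eq, hhalf]
  have hBinv : ∀ j z, z ∈ discB (1 / 2) → rotInv j z ∈ discB (1 / 2) := by
    intro j z hz
    rw [hBdef] at hz ⊢
    rwa [norm_rotInv_sub]
  -- agreement with `F₀` near the center
  have hev : ∀ j, ∀ᶠ z in nhds (1 / 2 : ℂ), G j (rotInv j z) = F₀ z := by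
    intro j
    obtain ⟨ρ, hρ⟩ : ∃ ρ : ℝ, ρ = min r (1 / 4) := ⟨_, rfl⟩
    have hρ0 : 0 < ρ := by rw [hρ]; positivity
    have hρr : ρ ≤ r := by rw [hρ]; exact min_le_left _ _
    have hρ4 : ρ ≤ 1 / 4 := by rw [hρ]; exact min_le_right _ _
    have hsub : ball (1 / 2 : ℂ) ρ ⊆ coneU := by
      intro z hz
      apply center_subset
      rw [hBdef]
      rw [mem_ball, dist_eq_norm] at hz
      have := norm_nonneg (z - 1 / 2)
      nlinarith
    have hE : EqOn (G j) (fun z => F₀ (rot j z)) (ball (1 / 2 : ℂ) ρ) := by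
      apply aux_identity isOpen_ball (convex_ball _ _).isPreconnected ((hGd j).mono hsub)
        (p := 1 / 2 - ρ / 2)
      · apply hF₀.comp (differentiable_rot j).differentiableOn
        intro z hz
        rw [mem_ball, dist_eq_norm] at hz ⊢
        rw [norm_rot_sub]
        linarith
      · rw [mem_ball, dist_eq_norm]
        have : (((1 / 2 - ρ / 2 : ℝ) : ℂ) - 1 / 2) = ((-(ρ / 2) : ℝ) : ℂ) := by
          push_cast; ring
        rw [this, Complex.norm_real, Real.norm_eq_abs, abs_neg, abs_of_pos (by positivity)]
        linarith
      · have : Ioo (1 / 2 - ρ) (1 / 2) ∈ nhds (1 / 2 - ρ / 2) :=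
          Ioo_mem_nhds (by linarith) (by linarith)
        filter_upwards [this] with t ht
        have ht' : t ∈ Ioo (0 : ℝ) (1 / 2) := ⟨by linarith [ht.1], ht.2⟩
        rw [hGr j t ht']
        apply h0 j t ht'
        rw [abs_lt]
        constructor <;> linarith [ht.1, ht.2]
    filter_upwards [ball_mem_nhds (1 / 2 : ℂ) hρ0] with z hz
    have := hE (x := rotInv j z) (by
      rw [mem_ball, dist_eq_norm] at hz ⊢
      rwa [norm_rotInv_sub])
    rw [this]
    simp only [rot_rotInv]
  have hBeq : ∀ i j, EqOn (fun z => G i (rotInv i z)) (fun z => G j (rotInv j z)) (discB (1 / 2)) := by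
    intro i j
    have hdf : ∀ k, DifferentiableOn ℂ (fun z => G k (rotInv k z)) (discB (1 / 2)) := by
      intro k
      exact (hGd k).comp (differentiable_rotInv k).differentiableOn
        (fun z hz => center_subset (hBinv k z hz))
    have hpc : IsPreconnected (discB (1 / 2)) := by
      rw [discB_eq_ball (by norm_num)]
      exact (convex_ball _ _).isPreconnected
    apply ((hdf i).analyticOnNhd (isOpen_discB _)).eqOn_of_preconnected_of_eventuallyEq
      ((hdf j).analyticOnNhd (isOpen_discB _)) hpc (z₀ := 1 / 2)
    · rw [hBdef]; norm_num
    · filter_upwards [hev i, hev j] with z h1 h2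
      rw [h1, h2]
  have hcons : ∀ i j z, rotInv i z ∈ coneU → rotInv j z ∈ coneU →
      G i (rotInv i z) = G j (rotInv j z) := by
    intro i j z hi hj
    by_cases hz : z ∈ discB (1 / 2)
    · exact hBeq i j hz
    · have hn : ∀ k, rotInv k z ∉ discB (1 / 2) := by
        intro k hk
        apply hz
        rw [hBdef] at hk ⊢
        rwa [norm_rotInv_sub] at hk
      have := sect_unique i j z (coneU_sect hi (hn i)) (coneU_sect hj (hn j))
      rw [this]
  classical
  obtain ⟨F, hF⟩ : ∃ F : ℂ → ℂ, ∀ j z, rotInv j z ∈ coneU → F z = G j (rotInv j z) := by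
    refine ⟨fun z => if h : ∃ j, rotInv j z ∈ coneU then G h.choose (rotInv h.choose z) else 0, ?_⟩
    intro j z hz
    have h : ∃ j, rotInv j z ∈ coneU := ⟨j, hz⟩
    simp only [h, dif_pos]
    exact hcons _ _ _ h.choose_spec hz
  have hFrot : ∀ j, ∀ ζ ∈ coneU, F (rot j ζ) = G j ζ := by
    intro j ζ hζ
    have := hF j (rot j ζ) (by rwa [rotInv_rot])
    rwa [rotInv_rot] at this
  have hpre : ∀ j, rot j ⁻¹' SquareD = SquareD := by
    intro j; ext z; exact mem_squareD_rot j z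
  refine ⟨F, ?_, ?_, ?_, ?_, ?_⟩
  · intro z hz
    obtain ⟨j, hj⟩ := squareD_cover hz
    have hj' := quartQ_subset hj
    have hEv : F =ᶠ[nhds z] fun z => G j (rotInv j z) := by
      have : rotInv j ⁻¹' coneU ∈ nhds z :=
        (isOpen_coneU.preimage (continuous_rotInv j)).mem_nhds hj'
      filter_upwards [this] with y hy
      exact hF j y hy
    have h1 : DifferentiableAt ℂ (fun z => G j (rotInv j z)) z :=
      DifferentiableAt.comp z ((hGd j).differentiableAt (isOpen_coneU.mem_nhds hj'))
        (differentiable_rotInv j z)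
    exact (hEv.differentiableAt_iff.2 h1).differentiableWithinAt
  · intro j x hx
    rw [hFrot j x ⟨x, hx, self_mem_discB hx.1⟩, hGr j x hx]
  · have h1 : rotInv 0 (1 / 2) ∈ coneU := by
      apply center_subset
      apply hBinv
      rw [hBdef]; norm_num
    rw [hF 0 _ h1]
    exact (hev 0).self_of_nhds
  · calc ENNReal.ofReal ((1 - 1 / √2) / Real.pi) * ∫⁻ z in SquareD, (‖F z‖₊ : ℝ≥0∞) ^ 2
        ≤ ENNReal.ofReal ((1 - 1 / √2) / Real.pi) *
          ∑ j, ∫⁻ z in quartQ, (‖G j z‖₊ : ℝ≥0∞) ^ 2 := by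
          refine mul_le_mul' le_rfl ?_
          have hsub : SquareD ⊆ ⋃ j, rotInv j ⁻¹' quartQ := by
            intro z hz
            exact mem_iUnion.2 (squareD_cover hz)
          refine (lintegral_mono_set hsub).trans ((lintegral_iUnion_le _ _).trans ?_)
          rw [tsum_fintype]
          apply Finset.sum_le_sum
          intro j _
          have e1 := (measurePreserving_rot j).setLIntegral_comp_preimage_emb
            (measurableEmbedding_rot j) (fun z => (‖F z‖₊ : ℝ≥0∞) ^ 2) (rotInv j ⁻¹' quartQ)
          have e2 : rot j ⁻¹' (rotInv j ⁻¹' quartQ) = quartQ := by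
            ext z
            simp only [mem_preimage, rotInv_rot]
          rw [e2] at e1
          rw [← e1]
          apply le_of_eq
          apply setLIntegral_congr_fun measurableSet_quartQ
          intro z hz
          simp only [hFrot j z (quartQ_subset hz)]
      _ = ∑ j, ENNReal.ofReal ((1 - 1 / √2) / Real.pi) *
          ∫⁻ z in quartQ, (‖G j z‖₊ : ℝ≥0∞) ^ 2 := Finset.mul_sum _ _ _
      _ ≤ ∑ j, cornerS (d j) :=
          Finset.sum_le_sum fun j _ => aux_corner_ge (hdc j) (hGm j) (hGs j)
  · have hj : ∀ j, cornerS (d j) ≤ ∫⁻ z in SquareD, (‖F z‖₊ : ℝ≥0∞) ^ 2 := by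
      intro j
      refine (aux_corner_le (hdc j) (hGm j) (hG0 j) (hGs j)).trans ?_
      have e1 := (measurePreserving_rot j).setLIntegral_comp_preimage_emb
        (measurableEmbedding_rot j) (fun z => (‖F z‖₊ : ℝ≥0∞) ^ 2) SquareD
      rw [hpre] at e1
      rw [← e1]
      refine le_trans (le_of_eq ?_) (lintegral_mono_set coneU_subset)
      apply setLIntegral_congr_fun isOpen_coneU.measurableSet
      intro z hz
      simp only [hFrot j z hz]
    refine (Finset.sum_le_sum fun j _ => hj j).trans ?_
    simp

theorem aux_iter_deriv {f : ℝ → ℂ} {a b : ℝ} (hf : ContDiffOn ℝ (⊤ : ℕ∞) f (Ioo a b)) (n : ℕ)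
    {x : ℝ} (hx : x ∈ Ioo a b) :
    HasDerivAt (iteratedDerivWithin n f (Ioo a b)) (iteratedDerivWithin (n + 1) f (Ioo a b) x) x := by
  have h1 : DifferentiableOn ℝ (iteratedDerivWithin n f (Ioo a b)) (Ioo a b) :=
    hf.differentiableOn_iteratedDerivWithin (by exact_mod_cast WithTop.coe_lt_top n)
      isOpen_Ioo.uniqueDiffOn
  have h2 := (h1 x hx).hasDerivWithinAt
  rw [← iteratedDerivWithin_succ] at h2
  exact h2.hasDerivAt (isOpen_Ioo.mem_nhds hx)

/-- The data at the four corners. -/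
noncomputable def datD (g h : ℝ → ℂ) : Fin 4 → ℕ → ℝ → ℂ :=
  ![fun n x => iteratedDerivWithin n g (Ioo 0 1) x,
    fun n x => (-1) ^ n * iteratedDerivWithin n g (Ioo 0 1) (1 - x),
    fun n x => (-1) ^ n * iteratedDerivWithin n h (Ioo (-(1 / 2)) (1 / 2)) (1 / 2 - x),
    fun n x => iteratedDerivWithin n h (Ioo (-(1 / 2)) (1 / 2)) (x - 1 / 2)]

theorem aux_dat_deriv {g h : ℝ → ℂ} (hg : ContDiffOn ℝ (⊤ : ℕ∞) g (Ioo 0 1))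
    (hh : ContDiffOn ℝ (⊤ : ℕ∞) h (Ioo (-(1 / 2)) (1 / 2))) (j : Fin 4) (n : ℕ) (x : ℝ)
    (hx : x ∈ Ioo (0 : ℝ) (1 / 2)) :
    HasDerivAt (datD g h j n) (datD g h j (n + 1) x) x := by
  obtain ⟨hx0, hx1⟩ := hx
  have hsub : ∀ c : ℝ, HasDerivAt (fun x : ℝ => c - x) (-1) x := by
    intro c
    simpa using (hasDerivAt_id x).const_sub c
  have hadd : HasDerivAt (fun x : ℝ => x - 1 / 2) 1 x := (hasDerivAt_id x).sub_const _
  fin_cases j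
  · exact aux_iter_deriv hg n ⟨by linarith, by linarith⟩
  · have h1 := aux_iter_deriv hg n (x := 1 - x) ⟨by linarith, by linarith⟩
    have h2 := (h1.scomp x (hsub 1)).const_mul ((-1 : ℂ) ^ n)
    refine h2.congr_deriv ?_
    simp [datD, pow_succ]
  · have h1 := aux_iter_deriv hh n (x := 1 / 2 - x) ⟨by linarith, by linarith⟩
    have h2 := (h1.scomp x (hsub (1 / 2))).const_mul ((-1 : ℂ) ^ n)
    refine h2.congr_deriv ?_
    simp [datD, pow_succ]
  · have h1 := aux_iter_deriv hh n (x := x - 1 / 2) ⟨by linarith, by linarith⟩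
    have h2 := h1.scomp x hadd
    refine h2.congr_deriv ?_
    simp [datD]

theorem aux_sum_eq {g h : ℝ → ℂ} (hg : ContDiffOn ℝ (⊤ : ℕ∞) g (Ioo 0 1))
    (hh : ContDiffOn ℝ (⊤ : ℕ∞) h (Ioo (-(1 / 2)) (1 / 2))) :
    diagDataSum g h = ∑ j, cornerS (datD g h j) := by
  have hm : ∀ j n, AEMeasurable (fun x : ℝ => ENNReal.ofReal (x ^ (2 * n + 1)) *
      (‖datD g h j n x‖₊ : ℝ≥0∞) ^ 2) (volume.restrict (Ioo (0 : ℝ) (1 / 2))) := by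
    intro j n
    have h1 : ContinuousOn (datD g h j n) (Ioo (0 : ℝ) (1 / 2)) :=
      fun x hx => (aux_dat_deriv hg hh j n x hx).continuousAt.continuousWithinAt
    have h2 := h1.aemeasurable measurableSet_Ioo (μ := volume)
    have h3 : Measurable (fun x : ℝ => ENNReal.ofReal (x ^ (2 * n + 1))) := by fun_prop
    exact h3.aemeasurable.mul (h2.nnnorm.coe_nnreal_ennreal.pow_const 2)
  simp only [cornerS]
  rw [← (Summable.tsum_finsetSum (fun _ _ => ENNReal.summable))]
  unfold diagDataSum
  congr 1
  ext n
  rw [← Finset.mul_sum, ← lintegral_finsetSum' _ (fun j _ => hm j n)]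
  congr 1
  apply lintegral_congr
  intro x
  rw [← Finset.mul_sum, Fin.sum_univ_four]
  simp [datD, nnnorm_mul]

theorem two_diagonal_recovery :
    ∃ c C : ℝ, 0 < c ∧ 0 < C ∧
      ∀ g h : ℝ → ℂ,
        ContDiffOn ℝ (⊤ : ℕ∞) g (Ioo 0 1) →
        ContDiffOn ℝ (⊤ : ℕ∞) h (Ioo (-(1 / 2)) (1 / 2)) →
        (∃ r : ℝ, 0 < r ∧ ∃ F₀ : ℂ → ℂ, DifferentiableOn ℂ F₀ (ball (1 / 2 : ℂ) r) ∧
          (∀ x : ℝ, |x - 1 / 2| < r → g x = F₀ (x : ℂ)) ∧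
          (∀ t : ℝ, |t| < r → h t = F₀ (1 / 2 + Complex.I * (t : ℂ)))) →
        diagDataSum g h < ⊤ →
        ∃ F : ℂ → ℂ, DifferentiableOn ℂ F SquareD ∧
          (∀ x ∈ Ioo (0 : ℝ) 1, F (x : ℂ) = g x) ∧
          (∀ t ∈ Ioo (-(1 / 2) : ℝ) (1 / 2), F (1 / 2 + Complex.I * (t : ℂ)) = h t) ∧
          (∫⁻ z in SquareD, (‖F z‖₊ : ℝ≥0∞) ^ 2 ∂volume) < ⊤ ∧
          ENNReal.ofReal c * ∫⁻ z in SquareD, (‖F z‖₊ : ℝ≥0∞) ^ 2 ∂volume ≤ diagDataSum g h ∧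
          diagDataSum g h ≤ ENNReal.ofReal C * ∫⁻ z in SquareD, (‖F z‖₊ : ℝ≥0∞) ^ 2 ∂volume := by
  have hc : 0 < (1 - 1 / √2) / Real.pi := div_pos aux_eps Real.pi_pos
  refine ⟨(1 - 1 / √2) / Real.pi, 4, hc, by norm_num, ?_⟩
  intro g h hg hh ⟨r, hr, F₀, hF₀, hgF, hhF⟩ hfin
  have hS := aux_sum_eq hg hh
  have hSj : ∀ j, cornerS (datD g h j) ≠ ⊤ := by
    intro j
    rw [hS] at hfin
    exact (ENNReal.sum_lt_top.1 hfin j (Finset.mem_univ j)).ne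
  have r0 : ∀ x : ℝ, rot 0 x = (x : ℂ) := by intro x; simp [rot, rotv]
  have r1 : ∀ x : ℝ, rot 1 x = ((1 - x : ℝ) : ℂ) := by
    intro x; simp [rot, rotv]; ring
  have r2 : ∀ x : ℝ, rot 2 x = 1 / 2 + Complex.I * ((1 / 2 - x : ℝ) : ℂ) := by
    intro x; simp [rot, rotv]; ring
  have r3 : ∀ x : ℝ, rot 3 x = 1 / 2 + Complex.I * ((x - 1 / 2 : ℝ) : ℂ) := by
    intro x; simp [rot, rotv]
  have d0 : ∀ x, datD g h 0 0 x = g x := by intro x; simp [datD]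
  have d1 : ∀ x, datD g h 1 0 x = g (1 - x) := by intro x; simp [datD]
  have d2 : ∀ x, datD g h 2 0 x = h (1 / 2 - x) := by intro x; simp [datD]
  have d3 : ∀ x, datD g h 3 0 x = h (x - 1 / 2) := by intro x; simp [datD]
  obtain ⟨F, hFd, hFr, hFc, hlo, hhi⟩ := aux_glue (aux_dat_deriv hg hh) hSj hr hF₀ (by
    intro j x hx hxr
    have hxr' : |1 / 2 - x| < r := by rwa [abs_sub_comm]
    fin_cases j
    · exact (d0 x).trans ((hgF x hxr).trans (congrArg F₀ (r0 x).symm))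
    · exact (d1 x).trans ((hgF (1 - x) (by convert hxr' using 2; ring)).trans
        (congrArg F₀ (r1 x).symm))
    · exact (d2 x).trans ((hhF _ hxr').trans (congrArg F₀ (r2 x).symm))
    · exact (d3 x).trans ((hhF _ hxr).trans (congrArg F₀ (r3 x).symm)))
  rw [← hS] at hlo hhi
  refine ⟨F, hFd, ?_, ?_, ?_, hlo, hhi⟩
  · intro x hx
    rcases lt_trichotomy x (1 / 2) with hlt | heq | hgt
    · have := hFr 0 x ⟨hx.1, hlt⟩
      rwa [r0, d0] at this
    · have := hgF (1 / 2) (by simpa using hr)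
      rw [heq, this]
      push_cast
      exact hFc
    · have := hFr 1 (1 - x) ⟨by linarith [hx.2], by linarith⟩
      rw [r1, d1] at this
      simpa using this
  · intro t ht
    rcases lt_trichotomy t 0 with hlt | heq | hgt
    · have := hFr 3 (1 / 2 + t) ⟨by linarith [ht.1], by linarith⟩
      rw [r3, d3] at this
      simpa using this
    · have := hhF 0 (by simpa using hr)
      rw [heq, this]
      simpa using hFc
    · have := hFr 2 (1 / 2 - t) ⟨by linarith [ht.2], by linarith⟩
      rw [r2, d2] at this
      simpa using this
  · by_contra htop
    rw [not_lt, top_le_iff] at htop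
    rw [htop, ENNReal.mul_top (by simpa using hc)] at hlo
    exact absurd hfin (not_lt.2 hlo)
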